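/- arXiv:1801.08492 — 5 statements merged into one kernel-verified Lean document; each statement's English description precedes it below -/
import Mathlib

section
/- Let F be a finite field of odd characteristic, λ : F → ℤ the quadratic character of F (the unique multiplicative character of Fˣ of exact order 2, extended by λ(0) := 0), γ ∈ Fˣ and z ∈ F. Then the number of pairs (u, v) ∈ F² satisfying v² − (u² − u·z − 4γ)·v + γ·z² = 0 equals |F|·(1 + δ_{z,0}) − 1 + ∑_{x ∈ F} λ(x·(x + 16γ)·(x + z²)), where δ_{z,0} = 1 if z = 0 and δ_{z,0} = 0 otherwise. -/
/-!
Count the curve by fibres over `v`. For `v ≠ 0` the equation is a genuine quadratic in `u`;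
completing the square with `s = 4v(2u − z)` turns it into
`s² = x(x + 16γ)(x + z²)` with `x = 4v`, so the fibre has `1 + λ(x(x + 16γ)(x + z²))` points.
For `v = 0` the equation degenerates to `γz² = 0`, so the fibre is all of `F` if `z = 0` and
empty otherwise; the cubic vanishes at `x = 0`, which gives the correction `|F|·δ_{z,0} − 1`.
Summing over `v` and reindexing by `x = 4v` yields the formula.
-/

/-- The fibre over `v ≠ 0`: completing the square reduces the count to that of the square roots
of the cubic at `x = 4v`. -/
theorem card_fibre_of_ne_zero {F : Type} [Field F] [Fintype F] [DecidableEq F]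
    (hF : ringChar F ≠ 2) (g z v : F) (hv : v ≠ 0) :
    (Fintype.card {u : F // v ^ 2 - (u ^ 2 - u * z - 4 * g) * v + g * z ^ 2 = 0} : ℤ)
      = 1 + quadraticChar F (4 * v * (4 * v + 16 * g) * (4 * v + z ^ 2)) := by
  have h2 : (2 : F) ≠ 0 := Ring.two_ne_zero hF
  have key : ∀ u : F, v ^ 2 - (u ^ 2 - u * z - 4 * g) * v + g * z ^ 2 = 0 ↔
      (4 * v * (2 * u - z)) ^ 2 = 4 * v * (4 * v + 16 * g) * (4 * v + z ^ 2) := by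
    intro u
    have h : (4 * v * (2 * u - z)) ^ 2 - 4 * v * (4 * v + 16 * g) * (4 * v + z ^ 2)
        = -(2 ^ 6 * v) * (v ^ 2 - (u ^ 2 - u * z - 4 * g) * v + g * z ^ 2) := by ring
    rw [← sub_eq_zero (a := (4 * v * (2 * u - z)) ^ 2), h, mul_eq_zero]
    simp [h2, hv]
  rw [add_comm, ← quadraticChar_card_sqrts hF, Set.toFinset_card]
  have h4 : (4 : F) ≠ 0 := by
    have := mul_ne_zero h2 h2
    norm_num at this
    exact this
  refine congrArg Nat.cast (Fintype.card_congr ?_)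
  refine
    { toFun := fun u => ⟨4 * v * (2 * u.1 - z), (key _).1 u.2⟩
      invFun := fun s => ⟨(s.1 / (4 * v) + z) / 2, (key _).2 ?_⟩
      left_inv := ?_
      right_inv := ?_ }
  · have hs : s.1 ^ 2 = _ := s.2
    refine Eq.trans (congrArg (· ^ 2) ?_) hs
    field_simp
    ring
  · rintro ⟨u, hu⟩
    ext
    field_simp
    ring
  · rintro ⟨s, hs⟩
    ext
    field_simp
    ring

/-- The fibre over `v = 0`, where the equation no longer involves `u`. -/
theorem card_fibre_zero {F : Type} [Field F] [Fintype F] [DecidableEq F]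
    (g z : F) (hg : g ≠ 0) :
    (Fintype.card {u : F // (0 : F) ^ 2 - (u ^ 2 - u * z - 4 * g) * 0 + g * z ^ 2 = 0} : ℤ)
      = (Fintype.card F : ℤ) * if z = 0 then 1 else 0 := by
  by_cases hz : z = 0 <;> simp [hz, hg, Fintype.card_subtype]

/-- **Point-counting lemma.** Let `F` be a finite field of odd characteristic, `λ` the
quadratic character of `F` (extended by `λ(0) = 0`), `γ ∈ Fˣ` and `z ∈ F`. The number of
pairs `(u, v) ∈ F²` with `v² − (u² − u·z − 4γ)·v + γ·z² = 0` equals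
`|F|·(1 + δ_{z,0}) − 1 + ∑_{x ∈ F} λ(x(x + 16γ)(x + z²))`. -/
theorem point_count_quadratic_fibres
    (F : Type) [Field F] [Fintype F] [DecidableEq F] (hF : ringChar F ≠ 2)
    (γ : Fˣ) (z : F) :
    (Nat.card {p : F × F //
        p.2 ^ 2 - (p.1 ^ 2 - p.1 * z - 4 * (γ : F)) * p.2 + (γ : F) * z ^ 2 = 0} : ℤ)
      = (Fintype.card F : ℤ) * (1 + if z = 0 then 1 else 0) - 1
        + ∑ x : F, quadraticChar F (x * (x + 16 * (γ : F)) * (x + z ^ 2)) := by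
  have h2 : (2 : F) ≠ 0 := Ring.two_ne_zero hF
  have h4 : (4 : F) ≠ 0 := by
    have := mul_ne_zero h2 h2
    norm_num at this
    exact this
  let e : {p : F × F //
        p.2 ^ 2 - (p.1 ^ 2 - p.1 * z - 4 * (γ : F)) * p.2 + (γ : F) * z ^ 2 = 0} ≃
      Σ v : F, {u : F // v ^ 2 - (u ^ 2 - u * z - 4 * (γ : F)) * v + (γ : F) * z ^ 2 = 0} :=
    { toFun := fun p => ⟨p.1.2, p.1.1, p.2⟩
      invFun := fun q => ⟨(q.2.1, q.1), q.2.2⟩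
      left_inv := fun _ => rfl
      right_inv := fun _ => rfl }
  rw [Nat.card_congr e, Nat.card_eq_fintype_card, Fintype.card_sigma, Nat.cast_sum]
  have hfib : ∀ v : F,
      (Fintype.card {u : F //
          v ^ 2 - (u ^ 2 - u * z - 4 * (γ : F)) * v + (γ : F) * z ^ 2 = 0} : ℤ)
        = (1 + quadraticChar F (4 * v * (4 * v + 16 * (γ : F)) * (4 * v + z ^ 2)))
          + if v = 0 then (Fintype.card F : ℤ) * (if z = 0 then 1 else 0) - 1 else 0 := by
    intro v
    by_cases hv : v = 0
    · subst hv
      rw [card_fibre_zero _ _ γ.ne_zero]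
      simp
    · rw [card_fibre_of_ne_zero hF _ _ _ hv, if_neg hv, add_zero]
  rw [Finset.sum_congr rfl fun v _ => hfib v, Finset.sum_add_distrib, Finset.sum_add_distrib,
    ← Equiv.sum_comp (Equiv.mulLeft₀ (4 : F) h4)
      (fun x => quadraticChar F (x * (x + 16 * (γ : F)) * (x + z ^ 2)))]
  simp only [Equiv.mulLeft₀_apply, Finset.sum_const, Finset.card_univ, nsmul_eq_mul, mul_one, Finset.sum_ite_eq',
    Finset.mem_univ, if_true]
  ring
end

section
/- Let F be a finite field of odd characteristic, ψ : F → ℂ a nontrivial additive character, λ : F → ℤ the quadratic character of F (extended by λ(0) := 0), and γ ∈ Fˣ. For β ∈ F define the double character sum M_F(β, γ) := ∑_{x ∈ F} ∑_{z ∈ F} λ(x·(x + 16γ)·(x + z²))·ψ(β·z) ∈ ℂ. Then M_F(0, γ) = 1, and for every β ≠ 0 one has M_F(β, γ) = Kl_F(ψ; γ·β²)² − |F|. -/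
/-!
The proof groups pairs `(x, y)` by `(s, p) = (x + y, x * y)`: the pair `(s, p)` has
`1 + λ(s² - 4p)` preimages, so `∑_{x,y} f (x + y) (x y) = ∑_{s,p} (1 + λ(s² - 4p)) f s p`
(`sum_add_mul`). Restricting to `p = c ≠ 0` gives
`∑_{x ≠ 0} g (x + c / x) = ∑_s (1 + λ(s² - 4c)) g s` (`sum_add_div`), and `g = 1` gives the
classical evaluation `∑_s λ(s² - 4c) = -1` (`sum_quadraticChar_sq_sub`). The value at `β = 0`
follows by summing first over `z` and then over `x`.

For `β ≠ 0`, rescaling gives `Kl(γβ²) = -∑_{x ≠ 0} ψ(β(x + γ / x))`, whose square is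
`∑_{p ≠ 0} ∑_s (1 + λ(s² - 4p)) ψ(β s (1 + γ / p))`. The term `p = -γ` contributes `|F| - 1`.
For `p ≠ -γ`, the substitution `z = s (1 + γ / p)` turns the inner sum into `G(-4(p + γ)² / p)`,
where `G(x) = ∑_z λ(x + z²) ψ(βz)`. Since `-4(p + γ)² / p = -4(p + γ² / p) - 8γ`, the sum over `p`
is evaluated by `sum_add_div` again: `x` is attained `1 + λ(x(x + 16γ))` times. The part
`∑_x λ(x(x + 16γ)) G(x)` is `M_F(β, γ)`, while `∑_x G(x) = 0`, and the omitted value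
`p = -γ`, that is `x = 0`, has `G(0) = -1`.
-/

/-- The (normalised) Kloosterman sum `Kl_F(ψ; α) = −∑_{x ∈ Fˣ} ψ(x + α·x⁻¹)`. -/
noncomputable def Kl (R : Type) [CommRing R] (ψ : R → ℂ) (α : R) : ℂ :=
  -∑ᶠ x : Rˣ, ψ ((x : R) + α * ((x⁻¹ : Rˣ) : R))

/-- The double character sum
`M_F(β, γ) = ∑_{x ∈ F} ∑_{z ∈ F} λ(x(x + 16γ)(x + z²))·ψ(β·z)`, where `λ` is the quadratic
character of `F`. -/
noncomputable def Msum (F : Type) [Field F] [Fintype F] [DecidableEq F]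
    (ψ : F → ℂ) (γ β : F) : ℂ :=
  ∑ x : F, ∑ z : F,
    (quadraticChar F (x * (x + 16 * γ) * (x + z ^ 2)) : ℂ) * ψ (β * z)

lemma four_ne_zero_of_ringChar {F : Type} [Field F] (hF : ringChar F ≠ 2) : (4 : F) ≠ 0 := by
  have h2 := Ring.two_ne_zero hF
  have : (4 : F) = 2 * 2 := by norm_num
  rw [this]; exact mul_ne_zero h2 h2

lemma sum_psi {F : Type} [Field F] [Fintype F] {ψ : AddChar F ℂ} (hψ : ψ ≠ 1) {β : F} (hβ : β ≠ 0) :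
    ∑ z : F, ψ (β * z) = 0 := by
  rw [Fintype.sum_equiv (Equiv.mulLeft₀ β hβ) (fun z => ψ (β * z)) (fun z => ψ z)
    (fun z => by simp)]
  exact AddChar.sum_eq_zero_of_ne_one hψ

section Helpers

variable {F : Type} [Field F] [Fintype F] [DecidableEq F]

lemma sum_sq (hF : ringChar F ≠ 2) (g : F → ℂ) :
    ∑ t : F, g (t ^ 2) = ∑ a : F, (1 + (quadraticChar F a : ℂ)) * g a := by
  rw [← Finset.sum_fiberwise (s := Finset.univ) (g := fun t : F => t ^ 2)]
  refine Finset.sum_congr rfl fun a _ => ?_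
  have hconst : ∀ t ∈ Finset.univ.filter (fun t : F => t ^ 2 = a), g (t ^ 2) = g a := by
    intro t ht
    rw [(Finset.mem_filter.mp ht).2]
  rw [Finset.sum_congr rfl hconst, Finset.sum_const, nsmul_eq_mul]
  have h := quadraticChar_card_sqrts hF a
  have h2 : ({x : F | x ^ 2 = a} : Set F).toFinset
      = Finset.univ.filter (fun t : F => t ^ 2 = a) := by
    ext; simp
  rw [h2] at h
  have h3 : ((Finset.univ.filter (fun t : F => t ^ 2 = a)).card : ℂ)
      = (quadraticChar F a : ℂ) + 1 := by exact_mod_cast h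
  rw [h3]; ring

/-- The number of `(x, y)` with `x + y = s` and `x * y = p` is `1 + λ(s² - 4p)`, in weighted
form. -/
lemma sum_add_mul (hF : ringChar F ≠ 2) (f : F → F → ℂ) :
    ∑ x : F, ∑ y : F, f (x + y) (x * y)
      = ∑ p : F, ∑ s : F, (1 + (quadraticChar F (s ^ 2 - 4 * p) : ℂ)) * f s p := by
  have h2 := Ring.two_ne_zero hF
  have h4 := four_ne_zero_of_ringChar hF
  have step1 : ∀ x : F, ∑ y : F, f (x + y) (x * y) = ∑ s : F, f s (x * (s - x)) := fun x =>
    Fintype.sum_equiv (Equiv.addLeft x) _ _ fun y => by simp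
  simp_rw [step1]
  rw [Finset.sum_comm, Finset.sum_comm (s := Finset.univ (α := F))
    (f := fun p s => (1 + (quadraticChar F (s ^ 2 - 4 * p) : ℂ)) * f s p)]
  refine Finset.sum_congr rfl fun s _ => ?_
  -- complete the square: `x * (s - x) = (s² - t²) / 4` with `t = 2x - s`
  have e1 : ∑ x : F, f s (x * (s - x)) = ∑ t : F, f s ((s ^ 2 - t ^ 2) / 4) :=
    Fintype.sum_equiv ((Equiv.mulLeft₀ (2 : F) h2).trans (Equiv.subRight s)) _ _ fun x => by
      congr 1
      simp only [Equiv.trans_apply, Equiv.mulLeft₀_apply, Equiv.subRight_apply]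
      field_simp
      ring
  rw [e1, sum_sq hF (fun a => f s ((s ^ 2 - a) / 4))]
  refine (Fintype.sum_equiv ((Equiv.mulLeft₀ (4 : F) h4).trans (Equiv.subLeft (s ^ 2)))
    _ _ fun p => ?_).symm
  simp only [Equiv.trans_apply, Equiv.mulLeft₀_apply, Equiv.subLeft_apply]
  congr 2
  field_simp
  ring

lemma sum_add_div (hF : ringChar F ≠ 2) {c : F} (hc : c ≠ 0) (g : F → ℂ) :
    ∑ x : F, (if x = 0 then 0 else g (x + c / x))
      = ∑ s : F, (1 + (quadraticChar F (s ^ 2 - 4 * c) : ℂ)) * g s := by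
  have h := sum_add_mul hF (fun s p => if p = c then g s else 0)
  have hs : ∑ p : F, ∑ s : F, (1 + (quadraticChar F (s ^ 2 - 4 * p) : ℂ)) *
      (if p = c then g s else 0)
        = ∑ s : F, (1 + (quadraticChar F (s ^ 2 - 4 * c) : ℂ)) * g s := by
    rw [Finset.sum_eq_single c]
    · simp
    · intro p _ hp
      simp [hp]
    · simp
  rw [← hs, ← h]
  refine Finset.sum_congr rfl fun x _ => ?_
  by_cases hx : x = 0
  · simp [hx, hc.symm]
  · rw [if_neg hx, Finset.sum_eq_single (c / x)]
    · rw [if_pos (mul_div_cancel₀ c hx)]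
    · intro y _ hy
      rw [if_neg]
      rintro rfl
      exact hy (by field_simp)
    · simp

lemma sum_quadraticChar_sq_sub (hF : ringChar F ≠ 2) {c : F} (hc : c ≠ 0) :
    ∑ s : F, (quadraticChar F (s ^ 2 - 4 * c) : ℂ) = -1 := by
  have h := sum_add_div hF hc (fun _ => 1)
  simp only [mul_one, Finset.sum_add_distrib] at h
  have h1 : ∑ x : F, (if x = 0 then (0 : ℂ) else 1) = ∑ x : F, 1 - 1 := by
    rw [eq_sub_iff_add_eq, ← Finset.sum_erase_add _ _ (Finset.mem_univ (0 : F)),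
      ← Finset.sum_erase_add _ _ (Finset.mem_univ (0 : F))]
    simp only [if_true, add_zero, add_left_inj]
    exact Finset.sum_congr rfl fun x hx => if_neg (Finset.ne_of_mem_erase hx)
  rw [h1] at h
  linear_combination -h

lemma sum_quadraticChar_add_sq (hF : ringChar F ≠ 2) {x : F} (hx : x ≠ 0) :
    ∑ z : F, (quadraticChar F (x + z ^ 2) : ℂ) = -1 := by
  have h2 := Ring.two_ne_zero hF
  have h4 := four_ne_zero_of_ringChar hF
  rw [← sum_quadraticChar_sq_sub hF (c := -x / 4) (div_ne_zero (neg_ne_zero.mpr hx) h4)]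
  refine Finset.sum_congr rfl fun z _ => ?_
  congr 2
  field_simp
  ring

lemma Msum_inner (ψ : F → ℂ) (γ β : F) :
    Msum F ψ γ β = ∑ x : F, (quadraticChar F (x * (x + 16 * γ)) : ℂ) *
      ∑ z : F, (quadraticChar F (x + z ^ 2) : ℂ) * ψ (β * z) := by
  unfold Msum
  refine Finset.sum_congr rfl fun x _ => ?_
  rw [Finset.mul_sum]
  refine Finset.sum_congr rfl fun z _ => ?_
  rw [map_mul (quadraticChar F) (x * (x + 16 * γ))]
  push_cast
  ring

/-- The substitution `x ↦ β x` makes the dependence on `β` linear in the argument of `ψ`. -/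
lemma Kl_eq (ψ : F → ℂ) (γ : F) {β : F} (hβ : β ≠ 0) :
    Kl F ψ (γ * β ^ 2) = -∑ x : F, if x = 0 then 0 else ψ (β * (x + γ / x)) := by
  unfold Kl
  rw [finsum_eq_sum_of_fintype]
  congr 1
  rw [← Finset.sum_erase (a := (0 : F)) Finset.univ
    (f := fun x => if x = 0 then 0 else ψ (β * (x + γ / x))) (by simp)]
  refine Finset.sum_bij (fun (u : Fˣ) _ => (u : F) / β) ?_ ?_ ?_ ?_
  · intro u _; simp [hβ]
  · intro u _ v _ h
    exact Units.ext ((div_left_inj' hβ).mp h)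
  · intro x hx
    have hx0 := Finset.ne_of_mem_erase hx
    exact ⟨Units.mk0 (x * β) (mul_ne_zero hx0 hβ), Finset.mem_univ _, by simp [hβ]⟩
  · intro u _
    have hu := u.ne_zero
    rw [if_neg (div_ne_zero hu hβ)]
    congr 1
    rw [Units.val_inv_eq_inv_val]
    field_simp

end Helpers

/-- **Identification of the double character sum.** For `F` a finite field of odd
characteristic, `ψ` a nontrivial additive character of `F` and `γ ∈ Fˣ`:
`M_F(0, γ) = 1`, and for every `β ≠ 0`, `M_F(β, γ) = Kl_F(ψ; γ·β²)² − |F|`. -/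
theorem Msum_eq_kloosterman_sq
    (F : Type) [Field F] [Fintype F] [DecidableEq F] (hF : ringChar F ≠ 2)
    (ψ : AddChar F ℂ) (hψ : ψ ≠ 1) (γ : Fˣ) :
    Msum F (fun x => ψ x) (γ : F) 0 = 1 ∧
      ∀ β : F, β ≠ 0 →
        Msum F (fun x => ψ x) (γ : F) β
          = (Kl F (fun x => ψ x) ((γ : F) * β ^ 2)) ^ 2 - (Fintype.card F : ℂ) := by
  have h4 := four_ne_zero_of_ringChar hF
  obtain ⟨c, hc, hγ⟩ : ∃ c : F, c ≠ 0 ∧ (γ : F) = c := ⟨γ, γ.ne_zero, rfl⟩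
  rw [hγ]
  constructor
  · rw [Msum_inner]
    have e1 : ∀ x : F, (quadraticChar F (x * (x + 16 * c)) : ℂ) *
        ∑ z : F, (quadraticChar F (x + z ^ 2) : ℂ) * ψ (0 * z)
          = -(quadraticChar F (x * (x + 16 * c)) : ℂ) := by
      intro x
      by_cases hx : x = 0
      · simp [hx]
      · simp only [zero_mul, AddChar.map_zero_eq_one, mul_one, sum_quadraticChar_add_sq hF hx]
        ring
    rw [Finset.sum_congr rfl fun x _ => e1 x, Finset.sum_neg_distrib, neg_eq_iff_eq_neg]
    -- complete the square: `x (x + 16c) = (x + 8c)² - 64c²`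
    rw [← sum_quadraticChar_sq_sub hF (c := (4 * c) ^ 2) (pow_ne_zero 2 (mul_ne_zero h4 hc))]
    refine Fintype.sum_equiv (Equiv.addRight (8 * c)) _ _ fun x => ?_
    congr 2
    simp only [Equiv.coe_addRight]
    ring
  · intro β hβ
    set G : F → ℂ := fun x => ∑ z : F, (quadraticChar F (x + z ^ 2) : ℂ) * ψ (β * z) with hG
    have hψ0 := sum_psi hψ hβ
    -- `G 0 = ∑_{z ≠ 0} ψ(βz)`
    have hG0 : G 0 = -1 := by
      have e : G 0 = ∑ z : F, ψ (β * z) - 1 := by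
        simp only [hG]
        rw [eq_sub_iff_add_eq, ← Finset.sum_erase_add _ _ (Finset.mem_univ (0 : F)),
          ← Finset.sum_erase_add _ _ (Finset.mem_univ (0 : F))]
        have : ∀ z ∈ Finset.univ.erase (0 : F),
            (quadraticChar F (0 + z ^ 2) : ℂ) * ψ (β * z) = ψ (β * z) := by
          intro z hz
          rw [zero_add, quadraticChar_sq_one' (Finset.ne_of_mem_erase hz)]
          simp
        rw [Finset.sum_congr rfl this]
        simp
      rw [e, hψ0]; ring
    have hGsum : ∑ x : F, G x = 0 := by
      rw [hG, Finset.sum_comm]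
      refine Finset.sum_eq_zero fun z _ => ?_
      rw [← Finset.sum_mul, Fintype.sum_equiv (Equiv.addRight (z ^ 2))
        (fun x : F => (quadraticChar F (x + z ^ 2) : ℂ)) (fun x => (quadraticChar F x : ℂ))
        (fun x => rfl)]
      have := quadraticChar_sum_zero hF
      have h' : ∑ x : F, (quadraticChar F x : ℂ) = 0 := by exact_mod_cast this
      rw [h', zero_mul]
    -- `x = -4u - 8c` with `u = p + c² / p` satisfies `x (x + 16c) = 4² (u² - 4c²)`
    have hcount : ∑ p : F, (if p = 0 then 0 else G (-4 * (p + c ^ 2 / p) - 8 * c))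
        = Msum F (fun x => ψ x) c β := by
      rw [sum_add_div hF (pow_ne_zero 2 hc) (fun u => G (-4 * u - 8 * c)), Msum_inner]
      have e : ∑ s : F, (1 + (quadraticChar F (s ^ 2 - 4 * c ^ 2) : ℂ)) * G (-4 * s - 8 * c)
          = ∑ x : F, (1 + (quadraticChar F (x * (x + 16 * c)) : ℂ)) * G x := by
        refine Fintype.sum_equiv ((Equiv.mulLeft₀ (-4 : F) (neg_ne_zero.mpr h4)).trans
          (Equiv.subRight (8 * c))) _ _ fun s => ?_
        simp only [Equiv.trans_apply, Equiv.mulLeft₀_apply, Equiv.subRight_apply]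
        congr 3
        have : (-4 * s - 8 * c) * (-4 * s - 8 * c + 16 * c) = 4 ^ 2 * (s ^ 2 - 4 * c ^ 2) := by
          ring
        rw [this, map_mul, quadraticChar_sq_one' h4, one_mul]
      rw [e]
      simp only [add_mul, one_mul, Finset.sum_add_distrib, hGsum, zero_add]
      rfl
    -- the square of the Kloosterman sum, grouped by `(s, p) = (x + y, x y)`
    have hKl : (Kl F (fun x => ψ x) (c * β ^ 2)) ^ 2
        = ∑ p : F, ∑ s : F, (1 + (quadraticChar F (s ^ 2 - 4 * p) : ℂ)) *
          (if p = 0 then 0 else ψ (β * (s * (1 + c / p)))) := by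
      rw [Kl_eq _ _ hβ, neg_sq, sq, Finset.sum_mul_sum,
        ← sum_add_mul hF (fun s p => if p = 0 then 0 else ψ (β * (s * (1 + c / p))))]
      refine Finset.sum_congr rfl fun x _ => Finset.sum_congr rfl fun y _ => ?_
      by_cases hx : x = 0
      · simp [hx]
      by_cases hy : y = 0
      · simp [hy]
      rw [if_neg hx, if_neg hy, if_neg (mul_ne_zero hx hy), ← AddChar.map_add_eq_mul]
      congr 1
      field_simp
      ring
    -- at `p = -c` the left side is `|F| - 1`; the first summand on the right is `G 0 = -1`, and
    -- the second supplies the remaining `|F|`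
    have hterm : ∀ p : F, ∑ s : F, (1 + (quadraticChar F (s ^ 2 - 4 * p) : ℂ)) *
          (if p = 0 then 0 else ψ (β * (s * (1 + c / p))))
        = (if p = 0 then 0 else G (-4 * (p + c ^ 2 / p) - 8 * c))
          + (if p = -c then (Fintype.card F : ℂ) else 0) := by
      intro p
      by_cases hp : p = 0
      · have : ¬ (0 : F) = -c := fun h => hc (neg_eq_zero.mp h.symm)
        simp [hp, this]
      simp only [if_neg hp]
      by_cases hpc : p = -c
      · have e1 : 1 + c / p = 0 := by rw [hpc]; field_simp; ring
        have e2 : -4 * (p + c ^ 2 / p) - 8 * c = 0 := by rw [hpc]; field_simp; ring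
        rw [e1, e2, hG0, if_pos hpc]
        simp only [mul_zero, AddChar.map_zero_eq_one, mul_one, Finset.sum_add_distrib,
          sum_quadraticChar_sq_sub hF hp]
        simp
        ring
      · rw [if_neg hpc, add_zero]
        have hpc' : p + c ≠ 0 := fun h => hpc (eq_neg_of_add_eq_zero_left h)
        have hr : 1 + c / p ≠ 0 := by
          have : 1 + c / p = (p + c) / p := by field_simp
          rw [this]; exact div_ne_zero hpc' hp
        have e : ∑ s : F, (1 + (quadraticChar F (s ^ 2 - 4 * p) : ℂ)) *
              ψ (β * (s * (1 + c / p)))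
            = ∑ z : F, (1 + (quadraticChar F (-4 * (p + c ^ 2 / p) - 8 * c + z ^ 2) : ℂ)) *
              ψ (β * z) := by
          refine Fintype.sum_equiv (Equiv.mulRight₀ (1 + c / p) hr) _ _ fun s => ?_
          simp only [Equiv.mulRight₀_apply]
          have : -4 * (p + c ^ 2 / p) - 8 * c + (s * (1 + c / p)) ^ 2
              = (1 + c / p) ^ 2 * (s ^ 2 - 4 * p) := by
            field_simp
            ring
          rw [this, map_mul (quadraticChar F), quadraticChar_sq_one' hr, one_mul]
        rw [e]
        simp only [add_mul, one_mul, Finset.sum_add_distrib, hψ0, zero_add]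
        rfl
    rw [hKl, Finset.sum_congr rfl fun p _ => hterm p, Finset.sum_add_distrib, hcount]
    simp
end

section
/- Let p be an odd prime and set c_p := 2(p − 1). For every finite field F of characteristic p, every nontrivial additive character ψ : F → ℂ and every α ∈ Fˣ, the angle θ_F(ψ; α) ∈ [0, π] of the Kloosterman sum Kl_F(ψ; α) satisfies θ_F(ψ; α) > |F|^(−c_p) and π − θ_F(ψ; α) > |F|^(−c_p). -/
/-- The angle `θ_F(ψ; α) = arccos(Re Kl_F(ψ; α) / (2·√|F|)) ∈ [0, π]` of the Kloosterman
sum `Kl_F(ψ; α)`. -/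
noncomputable def klAngle (R : Type) [CommRing R] (ψ : R → ℂ) (α : R) : ℝ :=
  Real.arccos ((Kl R ψ α).re / (2 * Real.sqrt (Nat.card R)))

section Auxiliary

open Polynomial

/-! ### The Stepanov method -/

/-- A squarefree nonconstant `f` is not a constant times the square of a rational function: at an
irreducible factor of `f`, the two sides of the equation have multiplicities of different parity. -/
theorem sq_indep {E : Type*} [Field E] {f R S : E[X]} (hf : Squarefree f) (hdeg : 0 < f.natDegree)
    {c : E} (hc : c ≠ 0) (h : f * R ^ 2 = C c * S ^ 2) : R = 0 ∧ S = 0 := by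
  have hf0 : f ≠ 0 := by rintro rfl; simp at hdeg
  have hnu : ¬ IsUnit f := fun hu => by
    rw [natDegree_eq_zero_of_isUnit hu] at hdeg; exact lt_irrefl _ hdeg
  have hCc : C c ≠ 0 := C_ne_zero.mpr hc
  by_cases hR : R = 0
  · subst hR
    refine ⟨rfl, ?_⟩
    have : C c * S ^ 2 = 0 := by rw [← h]; simp
    simpa [hc] using this
  exfalso
  have hS : S ≠ 0 := by
    rintro rfl
    have : f * R ^ 2 = 0 := by rw [h]; simp
    simp [hf0, hR] at this
  obtain ⟨P, hP, hPf⟩ := WfDvdMonoid.exists_irreducible_factor hnu hf0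
  have hPp : Prime P := hP.prime
  have e := congrArg (emultiplicity P) h
  have h1 : emultiplicity P f = 1 := by
    apply le_antisymm
    · exact (squarefree_iff_emultiplicity_le_one f).mp hf P |>.resolve_right hP.not_isUnit
    · exact le_emultiplicity_of_pow_dvd (by simpa using hPf)
  have hcu : emultiplicity P (C c) = 0 :=
    emultiplicity_eq_zero.mpr fun hd => hP.not_isUnit
      (isUnit_of_dvd_unit hd (isUnit_C.mpr hc.isUnit))
  have fR : FiniteMultiplicity P R := FiniteMultiplicity.of_prime_left hPp hR
  have fS : FiniteMultiplicity P S := FiniteMultiplicity.of_prime_left hPp hS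
  rw [emultiplicity_mul hPp, emultiplicity_mul hPp, emultiplicity_pow hPp, emultiplicity_pow hPp,
    h1, hcu, fR.emultiplicity_eq_multiplicity, fS.emultiplicity_eq_multiplicity] at e
  norm_cast at e
  omega

/-- Non-vanishing of Stepanov's auxiliary polynomial. The lowest nonzero term `R j + S j * f ^ N`
is divisible by `X ^ Q`, where `Q = 2 * N + 1`. As `f ^ Q ≡ f(0) ^ Q` modulo `X ^ Q`, multiplying by
`f * (R j - S j * f ^ N)` makes `f * R j ^ 2 - f(0) ^ Q * S j ^ 2` divisible by `X ^ Q`; its degree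
being less than `Q`, it is zero, and `sq_indep` applies. -/
theorem eq_zero_of_frob_sum_eq_zero {E : Type*} [Field E] (p k : ℕ) [Fact p.Prime] [CharP E p]
    {N e J : ℕ} (hQ : p ^ k = 2 * N + 1) (heN : e ≤ N)
    {f : E[X]} (hf : Squarefree f) (hdeg : f.natDegree = 2 * e) (he : 0 < e) (h0 : f.coeff 0 ≠ 0)
    (R S : Fin J → E[X]) (hR : ∀ j, (R j).natDegree ≤ N - e) (hS : ∀ j, (S j).natDegree ≤ N - e)
    (hsum : ∑ j : Fin J, X ^ ((2 * N + 1) * (j : ℕ)) * (R j + S j * f ^ N) = 0) :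
    ∀ j, R j = 0 ∧ S j = 0 := by
  intro j
  induction j using WellFoundedLT.induction with
  | _ j ih =>
  have hfQ : (X : E[X]) ^ (2 * N + 1) ∣ f ^ (2 * N + 1) - C (f.coeff 0 ^ (2 * N + 1)) := by
    rw [C_pow, ← hQ, ← sub_pow_char_pow]
    exact pow_dvd_pow_of_dvd (X_dvd_iff.mpr (by simp)) _
  have hlow : (X : E[X]) ^ (2 * N + 1) ∣ R j + S j * f ^ N := by
    rw [← Finset.add_sum_erase _ _ (Finset.mem_univ j), add_eq_zero_iff_eq_neg] at hsum
    have hd : (X : E[X]) ^ ((2 * N + 1) * (j : ℕ)) * X ^ (2 * N + 1) ∣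
        X ^ ((2 * N + 1) * (j : ℕ)) * (R j + S j * f ^ N) := by
      rw [hsum, dvd_neg]
      refine Finset.dvd_sum fun i hi => ?_
      rcases lt_or_gt_of_ne (Finset.ne_of_mem_erase hi) with hij | hij
      · simp [ih i hij]
      · refine Dvd.dvd.mul_right ?_ _
        rw [← pow_add]
        refine pow_dvd_pow _ ?_
        have : (j : ℕ) + 1 ≤ i := hij
        nlinarith
    exact (mul_dvd_mul_iff_left (pow_ne_zero _ X_ne_zero)).mp hd
  have hzero : f * R j ^ 2 - C (f.coeff 0 ^ (2 * N + 1)) * S j ^ 2 = 0 := by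
    apply eq_zero_of_dvd_of_natDegree_lt (p := (X : E[X]) ^ (2 * N + 1))
    · have : f * R j ^ 2 - C (f.coeff 0 ^ (2 * N + 1)) * S j ^ 2 =
          (R j + S j * f ^ N) * (f * (R j - S j * f ^ N)) +
          (f ^ (2 * N + 1) - C (f.coeff 0 ^ (2 * N + 1))) * S j ^ 2 := by ring
      rw [this]
      exact dvd_add (hlow.mul_right _) (hfQ.mul_right _)
    · rw [natDegree_X_pow]
      refine lt_of_le_of_lt (natDegree_sub_le_of_le (m := 2 * N) (n := 2 * N) ?_ ?_) (by simp)
      · refine natDegree_mul_le.trans ?_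
        have := natDegree_pow_le (p := R j) (n := 2)
        have := hR j
        omega
      · refine (natDegree_C_mul_le _ _).trans ?_
        have := natDegree_pow_le (p := S j) (n := 2)
        have := hS j
        omega
  exact sq_indep hf (by omega) (pow_ne_zero _ h0) (sub_eq_zero.mp hzero)

/-- Existence of a nontrivial relation, by counting dimensions. There are
`2 * (N + e + 1) * (N - e + 1)` unknown coefficients, and the sum is a polynomial of degree less than
`(2 * N + 1) * (N - e) + (N + e + 1) + 2 * e * N`; the former number minus the latter is
`2 * N + 1 - 2 * e ^ 2`. -/
theorem exists_kernel {E : Type*} [Field E] {N e : ℕ} (heN : e * e ≤ N)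
    {f : E[X]} (hdeg : f.natDegree = 2 * e) :
    ∃ r s : Fin (N + e + 1) → E[X], (∃ j, r j ≠ 0 ∨ s j ≠ 0) ∧
      (∀ j, (r j).natDegree ≤ N - e) ∧ (∀ j, (s j).natDegree ≤ N - e) ∧
      ∑ j : Fin (N + e + 1), X ^ (j : ℕ) *
        (expand E (2 * N + 1) (r j) * f ^ N + expand E (2 * N + 1) (s j)) = 0 := by
  classical
  have heN' : e ≤ N := le_trans (Nat.le_mul_self e) heN
  set D := N + 1 - e with hD
  set n := (2 * N + 1) * (N - e) + (N + e + 1) + 2 * e * N with hn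
  let φ : (Fin (N + e + 1) → degreeLT E D × degreeLT E D) →ₗ[E] E[X] :=
    { toFun := fun v => ∑ j : Fin (N + e + 1), X ^ (j : ℕ) *
        (expand E (2 * N + 1) ((v j).1 : E[X]) * f ^ N + expand E (2 * N + 1) ((v j).2 : E[X]))
      map_add' := by
        intro v w
        rw [← Finset.sum_add_distrib]
        refine Finset.sum_congr rfl fun j _ => ?_
        simp only [Pi.add_apply, Prod.fst_add, Prod.snd_add, Submodule.coe_add, map_add]
        ring
      map_smul' := by
        intro c v
        rw [RingHom.id_apply, Finset.smul_sum]
        refine Finset.sum_congr rfl fun j _ => ?_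
        simp only [Pi.smul_apply, Prod.smul_fst, Prod.smul_snd, Submodule.coe_smul,
          smul_eq_C_mul, map_mul, expand_C]
        ring }
  have hD1 : ∀ u : degreeLT E D, (u : E[X]).natDegree ≤ N - e := by
    intro u
    have := mem_degreeLT.mp u.2
    by_cases hu : (u : E[X]) = 0
    · simp [hu]
    · have := (natDegree_lt_iff_degree_lt hu).mpr this
      omega
  have hφ : ∀ v, φ v ∈ degreeLT E n := by
    intro v
    change (∑ j : Fin (N + e + 1), _) ∈ degreeLT E n
    refine Submodule.sum_mem _ fun j _ => mem_degreeLT.mpr ?_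
    refine lt_of_le_of_lt degree_le_natDegree ?_
    rw [Nat.cast_lt]
    have h1 : (expand E (2 * N + 1) ((v j).1 : E[X]) * f ^ N).natDegree
        ≤ (2 * N + 1) * (N - e) + 2 * e * N := by
      refine natDegree_mul_le.trans (add_le_add ?_ ?_)
      · rw [natDegree_expand, mul_comm]; exact Nat.mul_le_mul_left _ (hD1 _)
      · refine natDegree_pow_le.trans ?_; rw [hdeg, mul_comm]
    have h2 : (expand E (2 * N + 1) ((v j).2 : E[X])).natDegree
        ≤ (2 * N + 1) * (N - e) + 2 * e * N := by
      rw [natDegree_expand, mul_comm]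
      exact (Nat.mul_le_mul_left _ (hD1 _)).trans (Nat.le_add_right _ _)
    have h3 := natDegree_add_le_of_degree_le h1 h2
    have h4 := (natDegree_mul_le (p := X ^ (j : ℕ)) (q := (expand E (2 * N + 1) ((v j).1 : E[X]) *
      f ^ N + expand E (2 * N + 1) ((v j).2 : E[X]))))
    have h5 : (X ^ (j : ℕ) : E[X]).natDegree = j := natDegree_X_pow _
    have := j.2
    omega
  have hker : LinearMap.ker (φ.codRestrict _ hφ) ≠ ⊥ := by
    have : Module.Finite E (degreeLT E D) := Module.Finite.equiv (degreeLTEquiv E D).symm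
    have : Module.Finite E (degreeLT E n) := Module.Finite.equiv (degreeLTEquiv E n).symm
    apply LinearMap.ker_ne_bot_of_finrank_lt
    rw [Module.finrank_pi_fintype, (degreeLTEquiv E n).finrank_eq]
    simp only [Module.finrank_prod, (degreeLTEquiv E D).finrank_eq, Module.finrank_fin_fun,
      Finset.sum_const, Finset.card_univ, Fintype.card_fin, smul_eq_mul]
    obtain ⟨m, rfl⟩ := Nat.exists_eq_add_of_le heN'
    have hDm : D = m + 1 := by omega
    rw [hn, hDm, Nat.add_sub_cancel_left]
    nlinarith
  obtain ⟨v, hv, hv0⟩ := Submodule.exists_mem_ne_zero_of_ne_bot hker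
  refine ⟨fun j => (v j).1, fun j => (v j).2, ?_, fun j => hD1 _, fun j => hD1 _, ?_⟩
  · by_contra hcon
    push Not at hcon
    apply hv0
    funext j
    ext1
    · exact Subtype.ext (hcon j).1
    · exact Subtype.ext (hcon j).2
  · exact congrArg Subtype.val (LinearMap.mem_ker.mp hv)

/-- Stepanov's bound over a field `E` of order `Q ^ 2`, where `Q = 2 * N + 1`: the equation
`f(x) ^ ((|E| - 1) / 2) = a` has at most `|E| / 2 + O(Q)` solutions. -/
theorem stepanov {E : Type*} [Field E] [Fintype E] (p k : ℕ) [Fact p.Prime] [CharP E p]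
    {N e : ℕ} (hQ : p ^ k = 2 * N + 1) (hE : Fintype.card E = (2 * N + 1) ^ 2)
    (heN : e * e ≤ N) (he : 0 < e)
    {f : E[X]} (hf : Squarefree f) (hdeg : f.natDegree = 2 * e) (h0 : f.coeff 0 ≠ 0)
    {a : E} (ha : a ≠ 0) (A : Finset E) (hA : ∀ x ∈ A, f.eval x ^ (N * (2 * N + 2)) = a) :
    A.card ≤ 2 * N ^ 2 + 2 * N + 4 * e * N := by
  classical
  have heN' : e ≤ N := le_trans (Nat.le_mul_self e) heN
  obtain ⟨r, s, hne, hr, hs, hker⟩ := exists_kernel heN hdeg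
  set σ : E →+* E := iterateFrobenius E p k with hσ
  have hσx : ∀ x, σ x = x ^ (2 * N + 1) := fun x => by
    rw [hσ, iterateFrobenius_def, hQ]
  set G : E[X] := ∑ j : Fin (N + e + 1), X ^ ((2 * N + 1) * (j : ℕ)) *
    (C a * (r j).map σ + (s j).map σ * f ^ N) with hG
  have hG0 : G ≠ 0 := by
    intro h
    have := eq_zero_of_frob_sum_eq_zero p k hQ heN' hf hdeg he h0 (fun j => C a * (r j).map σ)
      (fun j => (s j).map σ)
      (fun j => (natDegree_C_mul_le _ _).trans (natDegree_map_le.trans (hr j)))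
      (fun j => natDegree_map_le.trans (hs j)) h
    obtain ⟨j, hj⟩ := hne
    obtain ⟨h1, h2⟩ := this j
    have h1' : (r j).map σ = 0 := by simpa [ha] using h1
    rw [Polynomial.map_eq_zero] at h1' h2
    tauto
  have hGdeg : G.natDegree ≤ 2 * N ^ 2 + 2 * N + 4 * e * N := by
    refine natDegree_sum_le_of_forall_le _ _ fun j _ => ?_
    have h1 : (C a * (r j).map σ).natDegree ≤ N - e + 2 * e * N :=
      ((natDegree_C_mul_le _ _).trans (natDegree_map_le.trans (hr j))).trans (Nat.le_add_right _ _)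
    have h2 : ((s j).map σ * f ^ N).natDegree ≤ N - e + 2 * e * N := by
      refine natDegree_mul_le.trans (add_le_add (natDegree_map_le.trans (hs j)) ?_)
      refine natDegree_pow_le.trans ?_; rw [hdeg, mul_comm]
    have h3 := natDegree_add_le_of_degree_le h1 h2
    refine natDegree_mul_le.trans ?_
    rw [natDegree_X_pow]
    have hj : (j : ℕ) ≤ N + e := Nat.lt_succ_iff.mp j.2
    have h4 : (2 * N + 1) * (j : ℕ) ≤ (2 * N + 1) * (N + e) := Nat.mul_le_mul_left _ hj
    obtain ⟨m, rfl⟩ := Nat.exists_eq_add_of_le heN'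
    rw [Nat.add_sub_cancel_left] at h3
    nlinarith
  refine (card_le_degree_of_subset_roots (p := G) ?_).trans hGdeg
  intro x hx
  rw [mem_roots hG0, IsRoot.def]
  have hxA := hA x hx
  have hxq : (x ^ (2 * N + 1)) ^ (2 * N + 1) = x := by
    rw [← pow_mul, ← sq, ← hE, FiniteField.pow_card]
  have hev := congrArg (fun P => σ (P.eval x) * f.eval x ^ N) hker
  simp only [eval_zero, map_zero, zero_mul] at hev
  rw [← hev, hG, eval_finsetSum, eval_finsetSum, map_sum, Finset.sum_mul]
  refine Finset.sum_congr rfl fun j _ => ?_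
  -- `σ` is an involution on points, so raising a relation in `x ^ Q` to the power `Q` returns `x`
  have hmap : ∀ P : E[X], σ ((expand E (2 * N + 1) P).eval x) = (P.map σ).eval x := by
    intro P
    rw [expand_eval, ← eval₂_at_apply, hσx, hxq, eval_map]
  simp only [eval_mul, eval_add, eval_pow, eval_X, eval_C, map_mul, map_add, map_pow, hmap]
  rw [hσx x, hσx (f.eval x), ← hxA]
  ring

/-! ### Quadratic character sums -/

/-- The polynomial `(X ^ e - X + t) ^ 2 - 4 * α`; in the application `e` is the order of the base
field. -/
noncomputable def asPoly {E : Type*} [Field E] (e : ℕ) (α t : E) : E[X] :=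
  (X ^ e - X + C t) ^ 2 - C (4 * α)

theorem asPoly_natDegree {E : Type*} [Field E] {e : ℕ} (he : 1 < e) (α t : E) :
    (asPoly e α t).natDegree = 2 * e := by
  have h1 : (X ^ e - X + C t : E[X]).natDegree = e := by
    rw [natDegree_add_C, natDegree_sub_eq_left_of_natDegree_lt] <;> simp [he]
  rw [asPoly, natDegree_sub_C, natDegree_pow, h1]

/-- The derivative is `-2 * (X ^ e - X + t)`, which is coprime to the polynomial since `4 * α` is a
unit. -/
theorem asPoly_squarefree {E : Type*} [Field E] (p m : ℕ) [CharP E p] (hp2 : (2 : E) ≠ 0)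
    (hm : m ≠ 0) {α : E} (hα : α ≠ 0) (t : E) : Squarefree (asPoly (p ^ m) α t) := by
  apply Separable.squarefree
  have hd : derivative (asPoly (p ^ m) α t) = -(2 * (X ^ p ^ m - X + C t)) := by
    have : ((p ^ m : ℕ) : E) = 0 := by simp [hm]
    simp [asPoly, derivative_pow, hm, show (C 2 : E[X]) = 2 from rfl]
  have h4 : (4 * α) ≠ 0 := by
    have : (4 : E) = 2 * 2 := by norm_num
    rw [this]; exact mul_ne_zero (mul_ne_zero hp2 hp2) hα
  refine ⟨-C (4 * α)⁻¹, -(C (2 : E)⁻¹ * C (4 * α)⁻¹ * (X ^ p ^ m - X + C t)), ?_⟩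
  rw [hd, asPoly]
  have e1 : C (4 * α)⁻¹ * C (4 * α) = 1 := by rw [← C_mul, inv_mul_cancel₀ h4, C_1]
  have e2 : C (2 : E)⁻¹ * (2 : E[X]) = 1 := by
    rw [show (2 : E[X]) = C 2 from rfl, ← C_mul, inv_mul_cancel₀ hp2, C_1]
  linear_combination e1 + C (4 * α)⁻¹ * (X ^ p ^ m - X + C t) ^ 2 * e2

/-- Stepanov's upper bounds for the numbers of `x` with character value `1` and `-1` turn into a
bound for the difference of these numbers, because together with the zeros of the polynomial they
add up to `|E|`. -/
theorem charSum_bound_of_ne {E : Type*} [Field E] [Fintype E] [DecidableEq E] (p k m : ℕ)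
    [Fact p.Prime] [CharP E p] (hp2 : p ≠ 2) {N : ℕ} (hQ : p ^ k = 2 * N + 1)
    (hE : Fintype.card E = (2 * N + 1) ^ 2) (hm : m ≠ 0) (hN : p ^ m * p ^ m ≤ N)
    {α : E} (hα : α ≠ 0) (t : E) (h0 : (asPoly (p ^ m) α t).coeff 0 ≠ 0) :
    |∑ x : E, quadraticChar E ((x ^ p ^ m - x + t) ^ 2 - 4 * α)| ≤
      (8 * p ^ m * N + 2 * p ^ m : ℕ) := by
  set e := p ^ m with he
  have hrc : ringChar E ≠ 2 := by rw [ringChar.eq E p]; exact hp2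
  have he1 : 1 < e := Nat.one_lt_pow hm (Fact.out : p.Prime).one_lt
  set f := asPoly e α t with hf
  have hev : ∀ x, f.eval x = (x ^ e - x + t) ^ 2 - 4 * α := by intro x; simp [hf, asPoly]
  have hdeg : f.natDegree = 2 * e := asPoly_natDegree he1 α t
  have hsq : Squarefree f := asPoly_squarefree p m (Ring.two_ne_zero hrc) hm hα t
  have hf0 : f ≠ 0 := hsq.ne_zero
  have hhalf : Fintype.card E / 2 = N * (2 * N + 2) := by
    rw [hE]
    have : (2 * N + 1) ^ 2 = 2 * (N * (2 * N + 2)) + 1 := by ring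
    omega
  have hb : ∀ a : ℤ, (a : E) ≠ 0 →
      (Finset.univ.filter fun x : E => quadraticChar E (f.eval x) = a).card
        ≤ 2 * N ^ 2 + 2 * N + 4 * e * N := by
    intro a ha
    refine stepanov p k hQ hE hN (by omega) hsq hdeg h0 ha _ fun x hx => ?_
    rw [← (Finset.mem_filter.mp hx).2, quadraticChar_eq_pow_of_char_ne_two' hrc, hhalf]
  have hP := hb 1 (by simp)
  have hM := hb (-1) (by simp)
  have hZ : (Finset.univ.filter fun x : E => quadraticChar E (f.eval x) = 0).card ≤ 2 * e := by
    rw [← hdeg]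
    refine card_le_degree_of_subset_roots ?_
    intro x hx
    rw [mem_roots hf0, IsRoot.def]
    exact quadraticChar_eq_zero_iff.mp (Finset.mem_filter.mp hx).2
  have hsum : ∑ x : E, quadraticChar E (f.eval x) =
      ((Finset.univ.filter fun x : E => quadraticChar E (f.eval x) = 1).card : ℤ) -
      (Finset.univ.filter fun x : E => quadraticChar E (f.eval x) = -1).card := by
    rw [Finset.card_filter, Finset.card_filter]
    push_cast
    rw [← Finset.sum_sub_distrib]
    refine Finset.sum_congr rfl fun x _ => ?_
    rcases quadraticChar_isQuadratic E (f.eval x) with h | h | h <;> simp [h]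
  have htot : ((Finset.univ.filter fun x : E => quadraticChar E (f.eval x) = 1).card : ℤ) +
      (Finset.univ.filter fun x : E => quadraticChar E (f.eval x) = -1).card +
      (Finset.univ.filter fun x : E => quadraticChar E (f.eval x) = 0).card =
      (2 * N + 1) ^ 2 := by
    have : ((2 * N + 1) ^ 2 : ℤ) = ∑ x : E, 1 := by
      rw [Finset.sum_const, Finset.card_univ, hE]; simp
    rw [this, Finset.card_filter, Finset.card_filter, Finset.card_filter]
    push_cast
    rw [← Finset.sum_add_distrib, ← Finset.sum_add_distrib]
    refine Finset.sum_congr rfl fun x _ => ?_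
    rcases quadraticChar_isQuadratic E (f.eval x) with h | h | h <;> simp [h]
  simp only [hev] at hsum htot hP hM hZ
  rw [hsum, abs_le]
  zify at hP hM hZ
  push_cast
  constructor <;> nlinarith

/-- Removes the condition on the constant coefficient from `charSum_bound_of_ne`. -/
theorem charSum_bound {E : Type*} [Field E] [Fintype E] [DecidableEq E] (p k m : ℕ)
    [Fact p.Prime] [CharP E p] (hp2 : p ≠ 2) {N : ℕ} (hQ : p ^ k = 2 * N + 1)
    (hE : Fintype.card E = (2 * N + 1) ^ 2) (hm : m ≠ 0) (hN : p ^ m * p ^ m ≤ N)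
    {α : E} (hα : α ≠ 0) (t : E) :
    |∑ x : E, quadraticChar E ((x ^ p ^ m - x + t) ^ 2 - 4 * α)| ≤
      (8 * p ^ m * N + 2 * p ^ m : ℕ) := by
  have hrc : ringChar E ≠ 2 := by rw [ringChar.eq E p]; exact hp2
  have he1 : 1 < p ^ m := Nat.one_lt_pow hm (Fact.out : p.Prime).one_lt
  have hsq : Squarefree (asPoly (p ^ m) α t) :=
    asPoly_squarefree p m (Ring.two_ne_zero hrc) hm hα t
  obtain ⟨a, ha⟩ := exists_eval_ne_zero_of_natDegree_lt_card (asPoly (p ^ m) α t) hsq.ne_zero (by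
    rw [asPoly_natDegree he1, Cardinal.mk_fintype, hE, Nat.cast_lt]
    nlinarith)
  -- translating `x` by `a` replaces `t` by `a ^ e - a + t`.
  have key := charSum_bound_of_ne p k m hp2 hQ hE hm hN hα (a ^ p ^ m - a + t) (by
    rw [coeff_zero_eq_eval_zero]
    have : (0 : E) ^ p ^ m = 0 := zero_pow (by omega)
    simpa [asPoly, this] using ha)
  rw [← Equiv.sum_comp (Equiv.addRight a)]
  convert key using 5 with x
  simp only [Equiv.coe_addRight, add_pow_char_pow]
  ring

end Auxiliary

/-! ### Kloosterman sums as quadratic character sums -/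

/-- The Kloosterman sum `∑ ψ (x + α / x)` over `x ≠ 0`, without the sign. -/
noncomputable def klSum {E : Type*} [Field E] [Fintype E] (ψ : AddChar E ℂ) (α : E) : ℂ :=
  open Classical in ∑ x : E, if x = 0 then 0 else ψ (x + α * x⁻¹)

theorem two_mul_four {E : Type*} [Field E] (h : (2 : E) ≠ 0) : (4 : E) ≠ 0 := by
  have : (4 : E) = 2 * 2 := by norm_num
  rw [this]; exact mul_ne_zero h h

/-- The number of `x ≠ 0` with `x + α / x = t` is `1 + χ (t ^ 2 - 4 * α)`, and the constant `1`
contributes `∑ ψ t = 0`. -/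
theorem klSum_eq_charSum {E : Type*} [Field E] [Fintype E] [DecidableEq E]
    (hrc : ringChar E ≠ 2) (ψ : AddChar E ℂ) (hψ : ψ ≠ 1) {α : E} (hα : α ≠ 0) :
    klSum ψ α = ∑ t : E, ψ t * (quadraticChar E (t ^ 2 - 4 * α) : ℤ) := by
  classical
  have h2 : (2 : E) ≠ 0 := Ring.two_ne_zero hrc
  have hcard : ∀ t : E,
      (((Finset.univ.filter fun x : E => x ≠ 0).filter fun x => x + α * x⁻¹ = t).card : ℤ) =
        quadraticChar E (t ^ 2 - 4 * α) + 1 := by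
    intro t
    rw [← quadraticChar_card_sqrts hrc]
    congr 1
    -- completing the square: `x + α / x = t` iff `(2 * x - t) ^ 2 = t ^ 2 - 4 * α`
    refine Finset.card_bij' (fun x _ => 2 * x - t) (fun y _ => (y + t) / 2) ?_ ?_ ?_ ?_
    · intro x hx
      simp only [Finset.mem_filter, Finset.mem_univ, true_and] at hx
      obtain ⟨hx0, hx⟩ := hx
      simp only [Set.mem_toFinset, Set.mem_ofPred_eq]
      rw [← hx]
      field_simp
      ring
    · intro y hy
      simp only [Set.mem_toFinset, Set.mem_ofPred_eq] at hy
      simp only [Finset.mem_filter, Finset.mem_univ, true_and]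
      have hne : y + t ≠ 0 := by
        intro h
        have : 4 * α = 0 := by linear_combination (t - y) * h + hy
        exact mul_ne_zero (two_mul_four h2) hα this
      refine ⟨div_ne_zero hne h2, ?_⟩
      field_simp
      linear_combination hy
    · intro x _
      field_simp
      ring
    · intro y _
      field_simp
      ring
  have h1 : klSum ψ α = ∑ x ∈ Finset.univ.filter (fun x : E => x ≠ 0), ψ (x + α * x⁻¹) := by
    rw [klSum, Finset.sum_filter]
    exact Finset.sum_congr rfl fun x _ => by by_cases h : x = 0 <;> simp [h]
  rw [h1, ← Finset.sum_fiberwise _ (fun x => x + α * x⁻¹)]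
  have h3 : ∀ t : E, ∑ x ∈ (Finset.univ.filter fun x : E => x ≠ 0).filter
      (fun x => x + α * x⁻¹ = t), ψ (x + α * x⁻¹) =
      ψ t * (quadraticChar E (t ^ 2 - 4 * α) : ℤ) + ψ t := by
    intro t
    rw [Finset.sum_congr rfl (g := fun _ => ψ t)
      fun x hx => by rw [(Finset.mem_filter.mp hx).2]]
    rw [Finset.sum_const, nsmul_eq_mul]
    have := congrArg (Int.cast (R := ℂ)) (hcard t)
    push_cast at this
    rw [this]; ring
  rw [Finset.sum_congr rfl fun t _ => h3 t, Finset.sum_add_distrib,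
    AddChar.sum_eq_zero_of_ne_one hψ, add_zero]

/-- The bound `O(√|E|)` for a character invariant under the Frobenius `x ↦ x ^ p ^ m`, with a
constant depending only on `p ^ m`. Here `2 * N + 1 = √|E|`. -/
theorem klSum_bound {E : Type*} [Field E] [Fintype E] (p k m : ℕ)
    [Fact p.Prime] [CharP E p] (hp2 : p ≠ 2) {N : ℕ} (hQ : p ^ k = 2 * N + 1)
    (hE : Fintype.card E = (2 * N + 1) ^ 2) (hm : m ≠ 0) (hN : p ^ m * p ^ m ≤ N)
    (ψ : AddChar E ℂ) (hψ : ψ ≠ 1) (hinv : ∀ x, ψ (x ^ p ^ m) = ψ x) {α : E} (hα : α ≠ 0) :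
    ‖klSum ψ α‖ ≤ 8 * p ^ m * N + 2 * p ^ m := by
  classical
  have hrc : ringChar E ≠ 2 := by rw [ringChar.eq E p]; exact hp2
  have hq : (0 : ℝ) < Fintype.card E := by exact_mod_cast Fintype.card_pos
  -- averaging over the substitutions `t ↦ t + (x ^ e - x)`, which leave `ψ` unchanged
  have key : (Fintype.card E : ℂ) * klSum ψ α =
      ∑ t : E, ψ t * (∑ x : E, quadraticChar E ((x ^ p ^ m - x + t) ^ 2 - 4 * α) : ℤ) := by
    have h1 : ∀ x : E, klSum ψ α =
        ∑ t : E, ψ t * (quadraticChar E ((x ^ p ^ m - x + t) ^ 2 - 4 * α) : ℤ) := by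
      intro x
      rw [klSum_eq_charSum hrc ψ hψ hα, ← Equiv.sum_comp (Equiv.addLeft (x ^ p ^ m - x))]
      refine Finset.sum_congr rfl fun t _ => ?_
      rw [Equiv.coe_addLeft, AddChar.map_add_eq_mul, AddChar.map_sub_eq_div, hinv,
        div_self (by rw [← norm_ne_zero_iff, AddChar.norm_apply]; exact one_ne_zero), one_mul]
    calc (Fintype.card E : ℂ) * klSum ψ α = ∑ x : E, klSum ψ α := by
          rw [Finset.sum_const, Finset.card_univ, nsmul_eq_mul]
      _ = ∑ x : E, ∑ t : E, ψ t *
            (quadraticChar E ((x ^ p ^ m - x + t) ^ 2 - 4 * α) : ℤ) :=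
          Finset.sum_congr rfl fun x _ => h1 x
      _ = _ := by
          rw [Finset.sum_comm]
          refine Finset.sum_congr rfl fun t _ => ?_
          rw [Int.cast_sum, Finset.mul_sum]
  have hb : ‖(Fintype.card E : ℂ) * klSum ψ α‖ ≤
      Fintype.card E * (8 * p ^ m * N + 2 * p ^ m) := by
    rw [key, ← nsmul_eq_mul, ← Finset.card_univ]
    refine (norm_sum_le_of_le _ fun t _ => ?_).trans (Finset.sum_const _).le
    rw [norm_mul, AddChar.norm_apply, one_mul, Complex.norm_intCast]
    exact_mod_cast charSum_bound p k m hp2 hQ hE hm hN hα t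
  rw [norm_mul, Complex.norm_natCast] at hb
  exact le_of_mul_le_mul_left hb hq

/-! ### The doubling identity in quadratic extensions -/

/-- As `v` runs over the field, the values `v ^ 2` and `ν * v ^ 2` together cover every element
exactly twice. -/
theorem sum_sq_add_sum_nonsquare {E : Type*} [Field E] [Fintype E] (hrc : ringChar E ≠ 2)
    {ν : E} (hν : ¬ IsSquare ν) (G : E → ℂ) :
    ∑ v : E, G (ν * v ^ 2) + ∑ v : E, G (v ^ 2) = 2 * ∑ w : E, G w := by
  classical
  have hν0 : ν ≠ 0 := by rintro rfl; exact hν (IsSquare.zero)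
  have h : ∀ H : E → ℂ, ∑ v : E, H (v ^ 2) = ∑ w : E, H w * (quadraticChar E w + 1 : ℤ) := by
    intro H
    rw [← Finset.sum_fiberwise _ (fun v : E => v ^ 2)]
    refine Finset.sum_congr rfl fun w _ => ?_
    rw [Finset.sum_congr rfl (g := fun _ => H w)
      fun x hx => by rw [(Finset.mem_filter.mp hx).2]]
    rw [Finset.sum_const, nsmul_eq_mul, ← quadraticChar_card_sqrts hrc, mul_comm, Int.cast_natCast]
    congr 3
    ext; simp
  rw [h fun w => G (ν * w), h G, Finset.mul_sum]
  rw [← Equiv.sum_comp (Equiv.mulLeft₀ ν hν0) (fun w => G w * _),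
    ← Equiv.sum_comp (Equiv.mulLeft₀ ν hν0) (fun w => 2 * G w), ← Finset.sum_add_distrib]
  refine Finset.sum_congr rfl fun w _ => ?_
  have hm : Equiv.mulLeft₀ ν hν0 w = ν * w := rfl
  simp only [hm, map_mul, quadraticChar_neg_one_iff_not_isSquare.mpr hν]
  push_cast
  ring

/-- The additive character `z ↦ ψ (z + z̄)` of the quadratic extension `E(√ν)`. -/
noncomputable def traceChar {E : Type*} [Field E] (ν : E) (ψ : AddChar E ℂ) :
    AddChar (QuadraticAlgebra E ν 0) ℂ :=
  ψ.compAddMonoidHom (QuadraticAlgebra.trace (R := E) (a := ν) (b := 0)).toAddMonoidHom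

theorem traceChar_apply {E : Type*} [Field E] (ν : E) (ψ : AddChar E ℂ)
    (z : QuadraticAlgebra E ν 0) : traceChar ν ψ z = ψ (2 * z.re) := by
  change ψ (QuadraticAlgebra.trace z) = _
  rw [QuadraticAlgebra.trace_def]; simp

/-- The doubling identity `S_{E'} = 2 |E| - S_E ^ 2` for `E' = E(√ν)`. With `z = u + v √ν`, the term
of `S_{E'}` at `z` depends only on `u` and the norm `u ^ 2 - ν * v ^ 2`; with `x = u + v`,
`y = u - v`, the term of `S_E ^ 2` at `(x, y)` is the same function of `u` and `u ^ 2 - v ^ 2`.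
By `sum_sq_add_sum_nonsquare` the two double sums add up to twice the sum over all pairs, which is
`|E|`. -/
theorem klSum_double {E : Type*} [Field E] [Fintype E] (hrc : ringChar E ≠ 2)
    {ν : E} (hν : ¬ IsSquare ν) [Fact (∀ r : E, r ^ 2 ≠ ν + 0 * r)]
    [Fintype (QuadraticAlgebra E ν 0)]
    (ψ : AddChar E ℂ) (hψ : ψ ≠ 1) {α : E} (hα : α ≠ 0) :
    klSum (traceChar ν ψ) (algebraMap E _ α) = 2 * Fintype.card E - klSum ψ α ^ 2 := by
  classical
  have h2 : (2 : E) ≠ 0 := Ring.two_ne_zero hrc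
  set g : E → E → ℂ := fun u b => if b = 0 then 0 else ψ (u * (2 + 2 * α * b⁻¹)) with hg
  have hA : klSum (traceChar ν ψ) (algebraMap E _ α) =
      ∑ u : E, ∑ v : E, g u (u ^ 2 - ν * v ^ 2) := by
    rw [klSum, ← Fintype.sum_prod_type', ← Equiv.sum_comp (QuadraticAlgebra.equivProd ν 0).symm]
    refine Finset.sum_congr rfl fun z _ => ?_
    set w := (QuadraticAlgebra.equivProd ν 0).symm z with hw
    have hn : w.norm = z.1 ^ 2 - ν * z.2 ^ 2 := by
      rw [QuadraticAlgebra.norm_def]; simp [hw]; ring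
    simp only [hg]
    rw [← hn]
    by_cases h : w = 0
    · rw [if_pos h, if_pos (QuadraticAlgebra.norm_eq_zero_iff_eq_zero.mpr h)]
    · rw [if_neg h, if_neg (mt QuadraticAlgebra.norm_eq_zero_iff_eq_zero.mp h), traceChar_apply]
      congr 1
      simp [QuadraticAlgebra.inv_def, hw]
      ring
  have hB : klSum ψ α ^ 2 = ∑ u : E, ∑ v : E, g u (u ^ 2 - v ^ 2) := by
    let τ : E × E ≃ E × E :=
      { toFun := fun z => (z.1 + z.2, z.1 - z.2)
        invFun := fun z => ((z.1 + z.2) / 2, (z.1 - z.2) / 2)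
        left_inv := fun z => by ext <;> simp <;> field_simp <;> ring
        right_inv := fun z => by ext <;> simp <;> field_simp <;> ring }
    rw [sq, klSum, Finset.sum_mul_sum, ← Fintype.sum_prod_type', ← Fintype.sum_prod_type',
      ← Equiv.sum_comp τ]
    refine Finset.sum_congr rfl fun z _ => ?_
    change (if z.1 + z.2 = 0 then 0 else _) * (if z.1 - z.2 = 0 then 0 else _) = g _ _
    simp only [hg]
    rw [sq_sub_sq, mul_eq_zero]
    by_cases h1 : z.1 + z.2 = 0
    · simp [h1]
    by_cases h3 : z.1 - z.2 = 0
    · simp [h3]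
    rw [if_neg h1, if_neg h3, if_neg (by tauto), ← AddChar.map_add_eq_mul]
    congr 1
    change z.1 + z.2 + α * (z.1 + z.2)⁻¹ + (z.1 - z.2 + α * (z.1 - z.2)⁻¹) = _
    field_simp
    ring
  have hC : ∑ u : E, ∑ w : E, g u w = Fintype.card E := by
    rw [Finset.sum_comm, Finset.sum_eq_single (-α)]
    · have : ∀ u, g u (-α) = 1 := by
        intro u
        simp only [hg]
        rw [if_neg (neg_ne_zero.mpr hα)]
        have : 2 + 2 * α * (-α)⁻¹ = 0 := by field_simp; ring
        rw [this, mul_zero, AddChar.map_zero_eq_one]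
      simp [this]
    · intro b _ hb
      by_cases hb0 : b = 0
      · simp [hg, hb0]
      simp only [hg, if_neg hb0]
      rw [AddChar.sum_mulShift _ (AddChar.IsPrimitive.of_ne_one hψ), if_neg, Nat.cast_zero]
      intro h
      apply hb
      field_simp at h
      rw [mul_zero] at h
      exact eq_neg_of_add_eq_zero_left ((mul_eq_zero.mp h).resolve_left h2)
    · simp
  rw [eq_sub_iff_add_eq, hA, hB, ← hC, ← Finset.sum_add_distrib, Finset.mul_sum]
  refine Finset.sum_congr rfl fun u _ => ?_
  rw [sum_sq_add_sum_nonsquare hrc hν (fun w => g u (u ^ 2 - w))]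
  congr 1
  exact Equiv.sum_comp (Equiv.subLeft (u ^ 2)) (g u)

/-- One step of the tower: a nontrivial character that is invariant under `x ↦ x ^ p ^ m` lifts to
the quadratic extension with the same properties, and `klSum` transforms by `klSum_double`. -/
theorem exists_quadratic_level (p : ℕ) [Fact p.Prime] (hp2 : p ≠ 2) (m : ℕ)
    {E : Type} [Field E] [Fintype E] [CharP E p] (ψ : AddChar E ℂ) (hψ : ψ ≠ 1)
    (hinv : ∀ x, ψ (x ^ p ^ m) = ψ x) {α : E} (hα : α ≠ 0) :
    ∃ (E' : Type) (_ : Field E') (_ : Fintype E') (_ : CharP E' p) (ψ' : AddChar E' ℂ) (α' : E'),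
      ψ' ≠ 1 ∧ (∀ x, ψ' (x ^ p ^ m) = ψ' x) ∧ α' ≠ 0 ∧
      Fintype.card E' = Fintype.card E ^ 2 ∧
      klSum ψ' α' = 2 * Fintype.card E - klSum ψ α ^ 2 := by
  classical
  have hrc : ringChar E ≠ 2 := by rw [ringChar.eq E p]; exact hp2
  have h2 : (2 : E) ≠ 0 := Ring.two_ne_zero hrc
  obtain ⟨ν, hν⟩ := FiniteField.exists_nonsquare hrc
  have hfact : Fact (∀ r : E, r ^ 2 ≠ ν + 0 * r) := ⟨fun r hr => hν ⟨r, by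
    rw [← sq, hr]; ring⟩⟩
  let _ : Fintype (QuadraticAlgebra E ν 0) :=
    Fintype.ofEquiv _ (QuadraticAlgebra.equivProd ν 0).symm
  have hchar : CharP (QuadraticAlgebra E ν 0) p :=
    charP_of_injective_algebraMap (algebraMap E (QuadraticAlgebra E ν 0)).injective p
  refine ⟨QuadraticAlgebra E ν 0, inferInstance, inferInstance, hchar, traceChar ν ψ,
    algebraMap E _ α, ?_, ?_, ?_, ?_, klSum_double hrc hν ψ hψ hα⟩
  · intro h
    apply hψ
    ext x
    have := traceChar_apply ν ψ ⟨x / 2, 0⟩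
    rw [h] at this
    simpa [mul_div_cancel₀ _ h2] using this.symm
  · intro z
    have : QuadraticAlgebra.trace (z ^ p ^ m) = (QuadraticAlgebra.trace z) ^ p ^ m := by
      apply (algebraMap E (QuadraticAlgebra E ν 0)).injective
      rw [QuadraticAlgebra.algebraMap_trace_eq_add_star, star_pow,
        map_pow (algebraMap E (QuadraticAlgebra E ν 0)),
        QuadraticAlgebra.algebraMap_trace_eq_add_star, add_pow_char_pow]
    change ψ (QuadraticAlgebra.trace _) = ψ (QuadraticAlgebra.trace _)
    rw [this, hinv]
  · simpa using hα
  · rw [Fintype.card_congr (QuadraticAlgebra.equivProd ν 0), Fintype.card_prod, sq]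

/-! ### The Weil bound -/

/-- An excess `δ` over the Weil bound is multiplied by at least `4` in each quadratic extension,
since `(2 + δ) ^ 2 - 2 ≥ 2 + 4 * δ`. -/
theorem exists_tower (p : ℕ) [Fact p.Prime] (hp2 : p ≠ 2) (m : ℕ)
    {F : Type} [Field F] [Fintype F] [CharP F p] (hF : Fintype.card F = p ^ m)
    (ψ : AddChar F ℂ) (hψ : ψ ≠ 1) {α : F} (hα : α ≠ 0) {δ : ℝ} (hδ : 0 ≤ δ)
    (hS : (2 + δ) * √(Fintype.card F) ≤ ‖klSum ψ α‖) (k : ℕ) :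
    ∃ (E : Type) (_ : Field E) (_ : Fintype E) (_ : CharP E p) (ψ' : AddChar E ℂ) (α' : E),
      ψ' ≠ 1 ∧ (∀ x, ψ' (x ^ p ^ m) = ψ' x) ∧ α' ≠ 0 ∧
      Fintype.card E = (p ^ m) ^ 2 ^ k ∧
      (2 + 4 ^ k * δ) * √(Fintype.card E) ≤ ‖klSum ψ' α'‖ := by
  induction k with
  | zero =>
    refine ⟨F, inferInstance, inferInstance, inferInstance, ψ, α, hψ, ?_, hα, by simp [hF], ?_⟩
    · intro x; rw [← hF, FiniteField.pow_card]
    · simpa using hS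
  | succ k ih =>
    obtain ⟨E, _, _, _, ψ', α', hψ', hinv, hα', hcard, hle⟩ := ih
    obtain ⟨E', i1, i2, i3, ψ'', α'', h1, h2, h3, h4, h5⟩ :=
      exists_quadratic_level p hp2 m ψ' hψ' hinv hα'
    refine ⟨E', i1, i2, i3, ψ'', α'', h1, h2, h3, ?_, ?_⟩
    · rw [h4, hcard, ← pow_mul, ← pow_succ]
    · rw [h4, h5, Nat.cast_pow, Real.sqrt_sq (Nat.cast_nonneg _)]
      set s := √(Fintype.card E : ℝ) with hs
      have hs2 : s ^ 2 = Fintype.card E := Real.sq_sqrt (Nat.cast_nonneg _)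
      have hs0 : 0 ≤ s := Real.sqrt_nonneg _
      have hd : 0 ≤ 4 ^ k * δ := by positivity
      have hn : ‖klSum ψ' α'‖ ^ 2 - 2 * Fintype.card E ≤
          ‖2 * (Fintype.card E : ℂ) - klSum ψ' α' ^ 2‖ := by
        have := norm_sub_norm_le (klSum ψ' α' ^ 2) (2 * (Fintype.card E : ℂ))
        rw [norm_sub_rev, norm_pow, norm_mul, Complex.norm_natCast] at this
        simpa using this
      refine le_trans ?_ hn
      have hsq := pow_le_pow_left₀ (by positivity) hle 2
      rw [mul_pow, hs2] at hsq
      have hq : (0 : ℝ) ≤ Fintype.card E := Nat.cast_nonneg _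
      rw [pow_succ]
      nlinarith [mul_nonneg hq (mul_nonneg hd hd)]

/-- Weil's bound for Kloosterman sums. An excess over it would grow without limit along the tower of
`exists_tower`, contrary to `klSum_bound`. -/
theorem weil_bound (p : ℕ) [Fact p.Prime] (hp2 : p ≠ 2)
    {F : Type} [Field F] [Fintype F] [CharP F p]
    (ψ : AddChar F ℂ) (hψ : ψ ≠ 1) {α : F} (hα : α ≠ 0) :
    ‖klSum ψ α‖ ≤ 2 * √(Fintype.card F) := by
  obtain ⟨⟨m, hm⟩, -, hF⟩ := FiniteField.card F p
  simp only [PNat.mk_coe] at hF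
  by_contra! hlt
  have hpp : p.Prime := Fact.out
  have hp3 : 3 ≤ p := by have := hpp.two_le; omega
  have hs0 : 0 < √(Fintype.card F : ℝ) := Real.sqrt_pos.mpr (by exact_mod_cast Fintype.card_pos)
  set δ := ‖klSum ψ α‖ / √(Fintype.card F) - 2 with hδ
  have hδ0 : 0 < δ := by rw [hδ, sub_pos, lt_div_iff₀ hs0]; exact hlt
  have hS : (2 + δ) * √(Fintype.card F) ≤ ‖klSum ψ α‖ := by
    rw [hδ, add_sub_cancel, div_mul_cancel₀ _ hs0.ne']
  -- `4 ^ k * δ` exceeds the constant `4 * |F|` for some `k ≥ 2`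
  obtain ⟨k, hk⟩ := pow_unbounded_of_one_lt (4 * (p ^ m : ℕ) / δ : ℝ) (by norm_num : (1 : ℝ) < 4)
  rw [div_lt_iff₀ hδ0] at hk
  obtain ⟨E, _, _, _, ψ', α', hψ', hinv, hα', hcard, hle⟩ :=
    exists_tower p hp2 m hF ψ hψ hα hδ0.le hS (k + 2 + 1)
  have hodd : Odd ((p ^ m) ^ 2 ^ (k + 2)) := ((hpp.odd_of_ne_two hp2).pow).pow
  obtain ⟨N, hN⟩ := hodd
  have hE : Fintype.card E = (2 * N + 1) ^ 2 := by rw [hcard, pow_succ 2, pow_mul, hN]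
  have hq3 : 3 ≤ p ^ m := hp3.trans (Nat.le_self_pow hm.ne' p)
  have hNe : p ^ m * p ^ m ≤ N := by
    have h1 : (p ^ m) ^ 4 ≤ 2 * N + 1 := by
      rw [← hN]
      refine Nat.pow_le_pow_right (by omega) ?_
      calc 4 = 2 ^ 2 := rfl
        _ ≤ 2 ^ (k + 2) := Nat.pow_le_pow_right (by norm_num) (by omega)
    have h2 : 9 ≤ p ^ m * p ^ m := Nat.mul_le_mul hq3 hq3
    have h3 : (p ^ m) ^ 4 = (p ^ m * p ^ m) * (p ^ m * p ^ m) := by ring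
    nlinarith
  have hb := klSum_bound p (m * 2 ^ (k + 2)) m hp2 (by rw [pow_mul, hN]) hE hm.ne' hNe ψ' hψ'
    hinv hα'
  rw [hE, Nat.cast_pow, Real.sqrt_sq (Nat.cast_nonneg _)] at hle
  have h4 : (4 : ℝ) ^ k * δ ≤ 4 ^ (k + 2 + 1) * δ :=
    mul_le_mul_of_nonneg_right (pow_le_pow_right₀ (by norm_num) (by omega)) hδ0.le
  push_cast at hle hk
  have hN0 : (0 : ℝ) ≤ N := Nat.cast_nonneg _
  have hq0 : (0 : ℝ) < (p : ℝ) ^ m := by exact_mod_cast (by omega : 0 < p ^ m)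
  have h6 : (2 + 4 * (p : ℝ) ^ m) * (2 * N + 1) ≤ (2 + 4 ^ (k + 2 + 1) * δ) * (2 * N + 1) := by
    apply mul_le_mul_of_nonneg_right <;> linarith
  nlinarith

/-- Kloosterman sums are real. -/
theorem klSum_conj {F : Type*} [Field F] [Fintype F] (ψ : AddChar F ℂ) (α : F) :
    (starRingEnd ℂ) (klSum ψ α) = klSum ψ α := by
  classical
  rw [klSum, map_sum, ← Equiv.sum_comp (Equiv.neg F)]
  refine Finset.sum_congr rfl fun x _ => ?_
  by_cases h : x = 0
  · simp [h]
  · rw [Equiv.neg_apply, if_neg (neg_ne_zero.mpr h), if_neg h, ← AddChar.map_neg_eq_conj]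
    congr 1
    field_simp
    ring

theorem Kl_eq_s3 {F : Type} [Field F] [Fintype F] (ψ : AddChar F ℂ) (α : F) :
    Kl F (fun x => ψ x) α = -klSum ψ α := by
  classical
  rw [Kl, finsum_eq_sum_of_fintype, klSum, neg_inj]
  rw [Finset.sum_ite, Finset.sum_const_zero, zero_add,
    Finset.sum_subtype (p := fun x : F => x ≠ 0) _ (by simp), ← Equiv.sum_comp unitsEquivNeZero]
  refine Finset.sum_congr rfl fun x _ => ?_
  simp

/-! ### The Liouville bound -/

open NumberField in
/-- The statement of `liouville`, proved in an arbitrary `p`-th cyclotomic extension `L` of `ℚ`. -/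
theorem liouville_aux {F : Type} [Field F] [Fintype F] (p : ℕ) [Fact p.Prime] [CharP F p]
    (L : Type) [Field L] [NumberField L] [IsCyclotomicExtension {p} ℚ L]
    (ψ : AddChar F ℂ) (α : F) :
    1 ≤ ‖klSum ψ α ^ 2 - 4 * Fintype.card F‖ * (((Fintype.card F : ℝ) + 1) ^ 2) ^ (p - 2) := by
  classical
  have hpp : p.Prime := Fact.out
  have : NeZero p := ⟨hpp.ne_zero⟩
  set q := Fintype.card F with hq
  have hζ := IsCyclotomicExtension.zeta_spec p ℚ L
  set ζ : 𝓞 L := hζ.toInteger with hζdef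
  have hζp : ζ ^ p = 1 := hζ.toInteger_isPrimitiveRoot.pow_eq_one
  let σ₀ : L →ₐ[ℚ] ℂ := IsAlgClosed.lift
  have hω : IsPrimitiveRoot (σ₀ (ζ : L)) p := hζ.map_of_injective σ₀.injective
  have hj : ∀ x : F, ∃ i, σ₀ (ζ : L) ^ i = ψ x := by
    intro x
    have : ψ x ^ p = 1 := by
      rw [← AddChar.map_nsmul_eq_pow, nsmul_eq_mul, CharP.cast_eq_zero, zero_mul,
        AddChar.map_zero_eq_one]
    obtain ⟨i, -, hi⟩ := hω.eq_pow_of_pow_eq_one this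
    exact ⟨i, hi⟩
  choose j hj using hj
  set κ : 𝓞 L := ∑ x : F, if x = 0 then 0 else ζ ^ j (x + α * x⁻¹) with hκ
  set β : 𝓞 L := κ ^ 2 - 4 * (q : 𝓞 L) with hβ
  have hp_nonunit : (p : 𝓞 L) ∈ nonunits (𝓞 L) := by
    intro hu
    have : IsUnit (p : ℤ) := isUnit_of_map_unit (algebraMap ℤ (𝓞 L)) _ (by simpa using hu)
    exact (Nat.prime_iff_prime_int.mp hpp).not_isUnit this
  -- modulo `p` one has `κ ^ p = q - 1 = -1`, whereas `4 * q = 0`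
  have hβ0 : β ≠ 0 := by
    intro h0
    have hchar := CharP.quotient (𝓞 L) p hp_nonunit
    let π := Ideal.Quotient.mk (Ideal.span {(p : 𝓞 L)})
    have hnt : Nontrivial (𝓞 L ⧸ Ideal.span {(p : 𝓞 L)}) := CharP.nontrivial_of_char_ne_one hpp.ne_one
    have hq0 : ((q : ℕ) : 𝓞 L ⧸ Ideal.span {(p : 𝓞 L)}) = 0 := by
      rw [CharP.cast_eq_zero_iff _ p, ← CharP.cast_eq_zero_iff F p, hq]
      exact FiniteField.cast_card_eq_zero F
    have h1 : π κ ^ p = -1 := by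
      rw [hκ, map_sum, sum_pow_char]
      have : ∀ x : F, π (if x = 0 then 0 else ζ ^ j (x + α * x⁻¹)) ^ p =
          1 - if x = 0 then 1 else 0 := by
        intro x
        by_cases hx : x = 0
        · simp [hx, hpp.ne_zero]
        · rw [if_neg hx, if_neg hx, ← map_pow, ← pow_mul, mul_comm, pow_mul, hζp]
          simp
      rw [Finset.sum_congr rfl fun x _ => this x, Finset.sum_sub_distrib]
      simp [← hq, hq0]
    have h2 : π κ ^ 2 = 0 := by
      rw [← map_pow, sub_eq_zero.mp h0, map_mul, map_natCast, hq0, mul_zero]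
    have h3 : (π κ ^ p) ^ 2 = 0 := by rw [← pow_mul, mul_comm, pow_mul, h2, zero_pow hpp.ne_zero]
    rw [h1] at h3
    simp at h3
  have hβL : (β : L) = (κ : L) ^ 2 - 4 * (q : L) := by
    change algebraMap (𝓞 L) L β = algebraMap (𝓞 L) L κ ^ 2 - _
    rw [hβ, map_sub, map_mul, map_pow, map_natCast, map_ofNat]
  have hκL : (κ : L) = ∑ x : F, if x = 0 then 0 else (ζ : L) ^ j (x + α * x⁻¹) := by
    change algebraMap (𝓞 L) L κ = _
    rw [hκ, map_sum]
    exact Finset.sum_congr rfl fun x _ => by by_cases hx : x = 0 <;> simp [hx]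
  have hσ₀ : σ₀ (β : L) = klSum ψ α ^ 2 - 4 * q := by
    have : σ₀ (κ : L) = klSum ψ α := by
      rw [hκL, klSum, map_sum]
      exact Finset.sum_congr rfl fun x _ => by by_cases hx : x = 0 <;> simp [hx, hj]
    rw [hβL, map_sub, map_mul, map_pow, this, map_natCast, map_ofNat]
  have hbound : ∀ σ : L →ₐ[ℚ] ℂ, ‖σ (β : L)‖ ≤ ((q : ℝ) + 1) ^ 2 := by
    intro σ
    have hz : ‖σ (ζ : L)‖ = 1 :=
      (hζ.map_of_injective σ.injective : IsPrimitiveRoot (σ (ζ : L)) p).norm'_eq_one hpp.ne_zero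
    have hk : ‖σ (κ : L)‖ ≤ q - 1 := by
      rw [hκL, map_sum]
      refine (norm_sum_le_of_le (f := fun x : F => σ (if x = 0 then 0 else
        (ζ : L) ^ j (x + α * x⁻¹))) _
        (n := fun x : F => 1 - if x = 0 then 1 else 0) fun x _ => ?_).trans ?_
      · by_cases hx : x = 0 <;> simp [hx, hz]
      · rw [Finset.sum_sub_distrib]; simp [← hq]
    rw [hβL, map_sub, map_mul, map_pow, map_natCast]
    refine (norm_sub_le _ _).trans ?_
    rw [norm_pow, norm_mul, Complex.norm_natCast]
    have h4 : ‖σ (4 : L)‖ = 4 := by rw [map_ofNat]; simp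
    rw [h4]
    have := pow_le_pow_left₀ (norm_nonneg _) hk 2
    nlinarith
  have hnorm : (1 : ℝ) ≤ ∏ σ : L →ₐ[ℚ] ℂ, ‖σ (β : L)‖ := by
    rw [← norm_prod, ← Algebra.norm_eq_prod_embeddings ℚ ℂ (β : L), ← Algebra.coe_norm_int]
    have h1 : (1 : ℤ) ≤ |Algebra.norm ℤ β| :=
      Int.one_le_abs (Algebra.norm_ne_zero_iff.mpr hβ0)
    have h2 : ‖(algebraMap ℚ ℂ) ((Algebra.norm ℤ β : ℤ) : ℚ)‖ = (|Algebra.norm ℤ β| : ℤ) := by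
      simp
    rw [h2]
    exact_mod_cast h1
  rw [← Finset.mul_prod_erase _ _ (Finset.mem_univ σ₀), hσ₀] at hnorm
  refine hnorm.trans (mul_le_mul_of_nonneg_left ?_ (norm_nonneg _))
  have hcard : (Finset.univ.erase σ₀).card = p - 2 := by
    rw [Finset.card_erase_of_mem (Finset.mem_univ _), Finset.card_univ, AlgHom.card,
      IsCyclotomicExtension.finrank L (Polynomial.cyclotomic.irreducible_rat hpp.pos),
      Nat.totient_prime hpp]
    omega
  rw [← hcard]
  exact (Finset.prod_le_prod (fun _ _ => norm_nonneg _) (fun σ _ => hbound σ)).trans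
    (Finset.prod_const _).le

/-- The Liouville-type lower bound for `|S ^ 2 - 4 q|`: a nonzero algebraic integer of the `p`-th
cyclotomic field has norm at least `1` in absolute value, and each of the other `p - 2` conjugates is
at most `(q + 1) ^ 2`. -/
theorem liouville {F : Type} [Field F] [Fintype F] (p : ℕ) [Fact p.Prime] [CharP F p]
    (ψ : AddChar F ℂ) (α : F) :
    1 ≤ ‖klSum ψ α ^ 2 - 4 * Fintype.card F‖ * (((Fintype.card F : ℝ) + 1) ^ 2) ^ (p - 2) := by
  have : NeZero p := ⟨(Fact.out : p.Prime).ne_zero⟩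
  have : IsCyclotomicExtension {p} ℚ (CyclotomicField p ℚ) := by
    -- the two `ℚ`-algebra structures on the field are only propositionally equal
    convert CyclotomicField.isCyclotomicExtension p ℚ
    · rfl
    · exact Subsingleton.elim _ _
  exact liouville_aux p (CyclotomicField p ℚ) ψ α

/-! ### Bounding the angle -/

/-- **Kloosterman angles are not too close to `0` or `π`.** Let `p` be an odd prime and
`c_p := 2(p − 1)`. For every finite field `F` of characteristic `p`, every nontrivial
additive character `ψ` of `F` and every `α ∈ Fˣ`, the angle `θ_F(ψ; α)` satisfies
`θ_F(ψ; α) > |F|^(−c_p)` and `π − θ_F(ψ; α) > |F|^(−c_p)`. -/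
theorem kloosterman_angle_liouville_bound
    (p : ℕ) (hp : p.Prime) (hodd : p ≠ 2)
    (F : Type) [Field F] [Fintype F] [CharP F p]
    (ψ : AddChar F ℂ) (hψ : ψ ≠ 1) (α : Fˣ) :
    (Fintype.card F : ℝ) ^ (-(2 * ((p : ℝ) - 1))) < klAngle F (fun x => ψ x) (α : F) ∧
    (Fintype.card F : ℝ) ^ (-(2 * ((p : ℝ) - 1)))
        < Real.pi - klAngle F (fun x => ψ x) (α : F) := by
  have : Fact p.Prime := ⟨hp⟩
  have hp3 : 3 ≤ p := by have := hp.two_le; omega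
  set S := klSum ψ (α : F) with hS
  set q : ℝ := ((Fintype.card F : ℕ) : ℝ) with hq
  have hq3 : 3 ≤ q := by
    obtain ⟨⟨m, hm⟩, -, hF⟩ := FiniteField.card F p
    have : 3 ≤ Fintype.card F := by
      rw [hF]; exact hp3.trans (Nat.le_self_pow hm.ne' p)
    rw [hq]; exact_mod_cast this
  have hreal : ((S.re : ℝ) : ℂ) = S := Complex.conj_eq_iff_re.mp (klSum_conj ψ (α : F))
  have hweil : |S.re| ≤ 2 * √q := by
    rw [← Real.norm_eq_abs, ← Complex.norm_real, hreal]
    exact weil_bound p hodd ψ hψ α.ne_zero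
  have hsq : S.re ^ 2 ≤ 4 * q := by
    have := sq_le_sq' (neg_le_of_abs_le hweil) (le_of_abs_le hweil)
    rw [mul_pow, Real.sq_sqrt (by linarith)] at this
    linarith
  have hliou := liouville p ψ (α : F)
  have hnorm : ‖klSum ψ (α : F) ^ 2 - 4 * (Fintype.card F : ℂ)‖ = 4 * q - S.re ^ 2 := by
    rw [← hS, ← hreal, show ((S.re : ℂ)) ^ 2 - 4 * (Fintype.card F : ℂ) =
      ((S.re ^ 2 - 4 * q : ℝ) : ℂ) by rw [hq]; push_cast; rfl, Complex.norm_real, Real.norm_eq_abs,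
      abs_sub_comm, abs_of_nonneg (by linarith), Complex.ofReal_re]
  rw [hnorm, ← hq] at hliou
  set c := (Kl F (fun x => ψ x) (α : F)).re / (2 * √(Nat.card F)) with hc
  have hc2 : 1 - c ^ 2 = (4 * q - S.re ^ 2) / (4 * q) := by
    rw [hc, Kl_eq_s3, Nat.card_eq_fintype_card, ← hq, Complex.neg_re, ← hS, div_pow, mul_pow,
      Real.sq_sqrt (by linarith)]
    field_simp
    ring
  set B : ℝ := q ^ (2 * (p - 1)) with hB
  have hB0 : 0 < B := by positivity
  have hexp : q ^ (-(2 * ((p : ℝ) - 1))) = B⁻¹ := by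
    rw [Real.rpow_neg (by linarith), hB, ← Real.rpow_natCast]
    push_cast [Nat.cast_sub (show 1 ≤ p by omega)]
    rfl
  -- for `q ≥ 3` one has `4 * q < q ^ 4` and `(q + 1) ^ 2 ≤ q ^ 4`
  have hM : 4 * q * ((q + 1) ^ 2) ^ (p - 2) < B ^ 2 := by
    obtain ⟨n, rfl⟩ := Nat.exists_eq_add_of_le (show 2 ≤ p by omega)
    have e1 : 2 + n - 2 = n := by omega
    have e2 : B ^ 2 = q ^ 4 * (q ^ 4) ^ n := by
      rw [hB, ← pow_mul, ← pow_mul, ← pow_add]; congr 1; omega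
    rw [e1, e2]
    have h1 : (q + 1) ^ 2 ≤ q ^ 4 := by
      have : q + 1 ≤ q ^ 2 := by nlinarith
      calc (q + 1) ^ 2 ≤ (q ^ 2) ^ 2 := pow_le_pow_left₀ (by linarith) this 2
        _ = q ^ 4 := by ring
    have h2 : 4 * q < q ^ 4 := by
      have : 9 ≤ q ^ 2 := by nlinarith
      nlinarith
    exact mul_lt_mul h2 (pow_le_pow_left₀ (by positivity) h1 n) (by positivity) (by positivity)
  have hsin : B⁻¹ < Real.sin (Real.arccos c) := by
    rw [Real.sin_arccos, hc2]
    apply Real.lt_sqrt_of_sq_lt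
    rw [lt_div_iff₀ (by linarith), inv_pow, inv_mul_lt_iff₀ (by positivity)]
    have hpos : 0 < 4 * q - S.re ^ 2 := by
      by_contra! hle
      have : (4 * q - S.re ^ 2) * ((q + 1) ^ 2) ^ (p - 2) ≤ 0 :=
        mul_nonpos_of_nonpos_of_nonneg hle (by positivity)
      linarith
    have := mul_lt_mul_of_pos_left hM hpos
    nlinarith
  change q ^ _ < Real.arccos c ∧ q ^ _ < Real.pi - Real.arccos c
  rw [hexp]
  refine ⟨hsin.trans_le (Real.sin_le (Real.arccos_nonneg c)), ?_⟩
  rw [← Real.sin_pi_sub] at hsin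
  exact hsin.trans_le (Real.sin_le (sub_nonneg.mpr (Real.arccos_le_pi c)))
end

section
/- Let φ₀ : [0, 1] → ℝ be a nondecreasing continuously differentiable function with φ₀ ≡ 0 on [0, 1/3] and φ₀ ≡ 1 on [2/3, 1]. Define w : [0, π] → ℝ by w(t) := −log(sin² t) for t ∈ (0, π) and w(0) = w(π) := 0, and for ε ∈ (0, 1) define φ_ε : [0, π] → ℝ by φ_ε(t) := φ₀(t/ε) for t ∈ [0, ε], φ_ε(t) := 1 for t ∈ [ε, π − ε], φ_ε(t) := φ₀((π − t)/ε) for t ∈ [π − ε, π], and set w_ε := w·φ_ε. Then there exists a constant C > 0 depending only on φ₀ such that for all ε ∈ (0, 1): (i) ∫₀^π |w_ε′(t)| dt ≤ C·(1 + |log ε|), and (ii) ∫₀^π (w(t) − w_ε(t))·sin²(t) dt ≤ C·ε·(1 + |log ε|). -/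
/-!
The proof dominates both integrands pointwise by one explicit family of functions,
`A (1/(t+ε) + 1/(π+ε-t)) + B (1/(t+ε)² + 1/(π+ε-t)²)`,
which is smooth on `[0, π]` and has integral at most `2A (π + |log ε|) + 2B/ε`.

For (i): by Jordan's inequality `|w'| = 2|cot t| ≤ π/t` on `(0, π/2]`, and `1/t ≤ 4/(t+ε)` once
`t ≥ ε/3`, that is, on the support of `w_ε`. The term `w φ_ε'` lives on `ε/3 ≤ t ≤ ε` (and its
mirror image), where `|w| ≤ 2 (5 + |log ε|)` and `|φ_ε'| ≤ K/ε ≤ 4Kε/(t+ε)²`, with `K` a bound for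
`|φ₀'|`. So `A = 4π` and `B = O(ε (1 + |log ε|))`.

For (ii): the integrand vanishes on `[ε, π-ε]` and lies in `[0, 1]` elsewhere, because
`-x log x ≤ 1` on `[0, 1]`; hence `A = 0` and `B = 4ε²` suffice.

The factor near `π` is handled by the reflection `t ↦ π - t`.
-/

open Real Set Filter Topology

/-- The dominating function; smooth on `[0, π]` for `ε > 0`. -/
noncomputable def majorant (A B ε t : ℝ) : ℝ :=
  A * (1 / (t + ε) + 1 / (π + ε - t)) + B * (1 / (t + ε) ^ 2 + 1 / (π + ε - t) ^ 2)

lemma majorant_reflect (A B ε t : ℝ) : majorant A B ε (π - t) = majorant A B ε t := by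
  unfold majorant
  rw [show π - t + ε = π + ε - t by ring, show π + ε - (π - t) = t + ε by ring]
  ring

lemma le_majorant {A B ε t : ℝ} (hA : 0 ≤ A) (hB : 0 ≤ B) (ht : t < π + ε) :
    A * (1 / (t + ε)) + B * (1 / (t + ε) ^ 2) ≤ majorant A B ε t := by
  unfold majorant
  have h : 0 < π + ε - t := by linarith
  have h1 : 0 ≤ A * (1 / (π + ε - t)) := by positivity
  have h2 : 0 ≤ B * (1 / (π + ε - t) ^ 2) := by positivity
  linarith

lemma intervalIntegrable_majorant (A B : ℝ) {ε : ℝ} (hε : 0 < ε) :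
    IntervalIntegrable (majorant A B ε) MeasureTheory.volume 0 π := by
  apply ContinuousOn.intervalIntegrable
  rw [uIcc_of_le pi_pos.le]
  unfold majorant
  have h1 : ∀ t ∈ Icc 0 π, t + ε ≠ 0 := fun t ht => by linarith [ht.1]
  have h2 : ∀ t ∈ Icc 0 π, π + ε - t ≠ 0 := fun t ht => by linarith [ht.2]
  have h3 : ∀ t ∈ Icc 0 π, (t + ε) ^ 2 ≠ 0 := fun t ht => pow_ne_zero 2 (h1 t ht)
  have h4 : ∀ t ∈ Icc 0 π, (π + ε - t) ^ 2 ≠ 0 := fun t ht => pow_ne_zero 2 (h2 t ht)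
  fun_prop (disch := assumption)

lemma integral_majorant_le {A B ε : ℝ} (hA : 0 ≤ A) (hB : 0 ≤ B) (hε : ε ∈ Ioo (0 : ℝ) 1) :
    ∫ t in (0 : ℝ)..π, majorant A B ε t ≤ 2 * A * (π + |log ε|) + 2 * B / ε := by
  obtain ⟨hε0, hε1⟩ := hε
  have key : ∫ t in (0 : ℝ)..π, majorant A B ε t =
      (A * (log (π + ε) - log (π + ε - π)) + B * (-(π + ε)⁻¹ + (π + ε - π)⁻¹)) -
      (A * (log (0 + ε) - log (π + ε - 0)) + B * (-(0 + ε)⁻¹ + (π + ε - 0)⁻¹)) := by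
    apply intervalIntegral.integral_eq_sub_of_hasDerivAt
      (f := fun t => A * (log (t + ε) - log (π + ε - t)) + B * (-(t + ε)⁻¹ + (π + ε - t)⁻¹))
    · intro t ht
      rw [uIcc_of_le pi_pos.le] at ht
      have h1 : t + ε ≠ 0 := by linarith [ht.1]
      have h2 : π + ε - t ≠ 0 := by linarith [ht.2]
      have d1 : HasDerivAt (fun t => t + ε) 1 t := (hasDerivAt_id t).add_const ε
      have d2 : HasDerivAt (fun t => π + ε - t) (-1) t := (hasDerivAt_id t).const_sub (π + ε)
      refine HasDerivAt.congr_deriv ((((d1.log h1).sub (d2.log h2)).const_mul A).add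
        (((d1.inv h1).neg.add (d2.inv h2)).const_mul B)) ?_
      unfold majorant
      ring
    · exact intervalIntegrable_majorant A B hε0
  rw [key]
  have e1 : π + ε - π = ε := by ring
  rw [e1, abs_of_neg (log_neg hε0 hε1)]
  have hlog : log (π + ε) ≤ π := by
    linarith [log_le_sub_one_of_pos (show 0 < π + ε by positivity)]
  have h3 : 0 ≤ B * (π + ε)⁻¹ := by positivity
  have h4 := mul_le_mul_of_nonneg_left hlog hA
  simp only [zero_add, sub_zero]
  rw [div_eq_mul_inv]
  linarith

/-- Near the left endpoint, a consequence of Jordan's inequality `2t/π ≤ sin t`. -/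
lemma inv_sin_le {ε t : ℝ} (hε : 0 < ε) (h1 : ε / 3 ≤ t) (h2 : t ≤ π / 2) :
    2 * (1 / sin t) ≤ 4 * π * (1 / (t + ε)) := by
  have ht : 0 < t := by linarith
  have hs : 2 / π * t ≤ sin t := mul_le_sin ht.le h2
  have hs0 : 0 < 2 / π * t := by positivity
  have hp := pi_pos
  calc 2 * (1 / sin t) ≤ 2 * (1 / (2 / π * t)) := by gcongr
    _ = π * (1 / t) := by field_simp
    _ ≤ π * (4 * (1 / (t + ε))) := by
      gcongr
      rw [← div_eq_mul_one_div, div_le_div_iff₀ ht (by linarith)]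
      linarith
    _ = _ := by ring

lemma hasDerivAt_neg_log_sin_sq {t : ℝ} (hs : sin t ≠ 0) :
    HasDerivAt (fun s => -log (sin s ^ 2)) (-(2 * (cos t / sin t))) t := by
  have h := (((hasDerivAt_sin t).pow 2).log (pow_ne_zero 2 hs)).neg
  refine h.congr_deriv ?_
  simp
  field_simp

lemma abs_deriv_le {t : ℝ} (hs : 0 < sin t) :
    |-(2 * (cos t / sin t))| ≤ 2 * (1 / sin t) := by
  rw [abs_neg, abs_mul, abs_div, abs_of_pos hs, abs_two]
  gcongr
  exact abs_cos_le_one t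

/-- The left edge of the truncation: here `w_ε(s) = w(s) φ₀(s/ε)`. The point `ε/3` is left out
so that `w_ε` vanishes in a whole neighbourhood of every `t` below it. -/
lemma abs_deriv_edge_le {φ₀ φ₀' : ℝ → ℝ} {K : ℝ} (hK : ∀ t ∈ Icc (0 : ℝ) 1, |φ₀' t| ≤ K)
    (hb : ∀ t ∈ Icc (0 : ℝ) 1, 0 ≤ φ₀ t ∧ φ₀ t ≤ 1)
    (hderiv : ∀ t ∈ Icc (0 : ℝ) 1, HasDerivWithinAt φ₀ (φ₀' t) (Icc (0 : ℝ) 1) t)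
    (h0 : ∀ t ∈ Icc (0 : ℝ) (1 / 3), φ₀ t = 0) {ε t : ℝ} (hε : ε ∈ Ioo (0 : ℝ) 1)
    (ht0 : 0 < t) (htε : t < ε) (hne : t ≠ ε / 3) :
    |deriv (fun s => -log (sin s ^ 2) * φ₀ (s / ε)) t| ≤
      majorant (4 * π) (8 * K * (5 + |log ε|) * ε) ε t := by
  obtain ⟨hε0, hε1⟩ := hε
  have hK0 : 0 ≤ K := (abs_nonneg _).trans (hK 0 (by simp))
  have hπ := pi_gt_three
  refine le_trans ?_ (le_majorant (by positivity) (by positivity) (by linarith))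
  rcases lt_or_gt_of_ne hne with hlt | hgt
  · have hz : (fun s => -log (sin s ^ 2) * φ₀ (s / ε)) =ᶠ[𝓝 t] fun _ => (0 : ℝ) := by
      filter_upwards [Ioo_mem_nhds ht0 hlt] with s hs
      rw [h0 (s / ε) ⟨div_nonneg hs.1.le hε0.le, by rw [div_le_iff₀ hε0]; linarith [hs.2]⟩, mul_zero]
    rw [hz.deriv_eq, deriv_const, abs_zero]
    positivity
  · have hs : 0 < sin t := sin_pos_of_pos_of_lt_pi ht0 (by linarith)
    have hu : t / ε ∈ Ioo (0 : ℝ) 1 := ⟨by positivity, by rwa [div_lt_one hε0]⟩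
    have hu' := Ioo_subset_Icc_self hu
    have hd : HasDerivAt φ₀ (φ₀' (t / ε)) (t / ε) :=
      (hderiv _ hu').hasDerivAt (Icc_mem_nhds hu.1 hu.2)
    have hd2 : HasDerivAt (fun s => φ₀ (s / ε)) (φ₀' (t / ε) * (1 / ε)) t :=
      hd.comp t ((hasDerivAt_id t).div_const ε)
    have hD := (hasDerivAt_neg_log_sin_sq hs.ne').mul hd2
    have hDe : deriv (fun s => -log (sin s ^ 2) * φ₀ (s / ε)) t = _ := hD.deriv
    rw [hDe]
    have hw : |-log (sin t ^ 2)| ≤ 2 * (5 + |log ε|) := by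
      have hlow : ε / 6 ≤ sin t := by
        have h1 : 2 / π * t ≤ sin t := mul_le_sin ht0.le (by linarith)
        have h2 : 1 / 2 ≤ 2 / π := by
          rw [div_le_div_iff₀ (by norm_num) pi_pos]; linarith [pi_le_four]
        have h3 := mul_le_mul_of_nonneg_right h2 ht0.le
        linarith
      have h4 : log (ε / 6) ≤ log (sin t) := log_le_log (by positivity) hlow
      rw [log_div hε0.ne' (by norm_num)] at h4
      have h5 : log 6 ≤ 5 := by
        linarith [log_le_sub_one_of_pos (show (0 : ℝ) < 6 by norm_num)]
      have h6 : log (sin t) ≤ 0 := log_nonpos hs.le (sin_le_one t)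
      rw [log_pow, abs_neg, abs_mul, abs_of_nonpos h6, abs_of_neg (log_neg hε0 hε1)]
      norm_num
      linarith
    have hφ : |φ₀ (t / ε)| ≤ 1 := abs_le.2 ⟨by linarith [(hb _ hu').1], (hb _ hu').2⟩
    have hε' : 1 / ε ≤ 4 * ε * (1 / (t + ε) ^ 2) := by
      rw [← div_eq_mul_one_div, div_le_div_iff₀ hε0 (by positivity)]
      nlinarith
    calc _ ≤ |-(2 * (cos t / sin t)) * φ₀ (t / ε)|
          + |-log (sin t ^ 2) * (φ₀' (t / ε) * (1 / ε))| := abs_add_le _ _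
      _ = |-(2 * (cos t / sin t))| * |φ₀ (t / ε)|
          + |-log (sin t ^ 2)| * (|φ₀' (t / ε)| * (1 / ε)) := by
        rw [abs_mul, abs_mul (-log _), abs_mul (φ₀' _), abs_of_pos (show 0 < 1 / ε by positivity)]
      _ ≤ (4 * π * (1 / (t + ε))) * 1
          + 2 * (5 + |log ε|) * (K * (4 * ε * (1 / (t + ε) ^ 2))) := by
        gcongr
        · exact (abs_deriv_le hs).trans (inv_sin_le hε0 hgt.le (by linarith))
        · exact hK _ hu'
      _ = _ := by ring

/-- On `[0, π]`, `w sin² = -x log x` with `x = sin²`, which lies in `[0, 1]`. -/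
lemma neg_log_sin_sq_mul_mem (t : ℝ) :
    0 ≤ -log (sin t ^ 2) * sin t ^ 2 ∧ -log (sin t ^ 2) * sin t ^ 2 ≤ 1 := by
  have hx1 : sin t ^ 2 ≤ 1 := sin_sq_le_one t
  rcases (sq_nonneg (sin t)).eq_or_lt with h | h
  · rw [← h]; simp
  · refine ⟨mul_nonneg (neg_nonneg.2 (log_nonpos h.le hx1)) h.le, ?_⟩
    have h1 := one_sub_inv_le_log_of_pos h
    have h2 := mul_le_mul_of_nonneg_right h1 h.le
    rw [sub_mul, inv_mul_cancel₀ h.ne'] at h2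
    linarith

lemma one_le_majorant {ε t : ℝ} (hε : 0 < ε) (h0 : 0 ≤ t) (h1 : t ≤ ε) :
    1 ≤ majorant 0 (4 * ε ^ 2) ε t := by
  refine le_trans ?_ (le_majorant le_rfl (by positivity) (by linarith [pi_pos]))
  rw [zero_mul, zero_add, ← div_eq_mul_one_div, le_div_iff₀ (by positivity)]
  nlinarith


/-- **Analytic estimates for the truncations `w_ε` of `w(t) = −log(sin² t)`.**
Let `φ₀ : [0,1] → ℝ` be nondecreasing, continuously differentiable, `≡ 0` on `[0, 1/3]`
and `≡ 1` on `[2/3, 1]`. Let `w(t) := −log(sin² t)` on `[0, π]` (with `w(0) = w(π) = 0`,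
which holds automatically since `Real.log 0 = 0`), and for `ε ∈ (0,1)` let
`φ_ε(t) := φ₀(t/ε)` on `[0, ε]`, `1` on `[ε, π − ε]`, `φ₀((π − t)/ε)` on `[π − ε, π]`,
and `w_ε := w·φ_ε`. Then there is `C > 0`, depending only on `φ₀`, such that for all
`ε ∈ (0,1)`: `∫₀^π |w_ε′(t)| dt ≤ C·(1 + |log ε|)` and
`∫₀^π (w(t) − w_ε(t))·sin²(t) dt ≤ C·ε·(1 + |log ε|)`. -/
theorem analytic_estimates_truncated_log_sin_sq
    (φ₀ φ₀' : ℝ → ℝ)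
    (hmono : MonotoneOn φ₀ (Set.Icc 0 1))
    (hderiv : ∀ t ∈ Set.Icc (0:ℝ) 1, HasDerivWithinAt φ₀ (φ₀' t) (Set.Icc (0:ℝ) 1) t)
    (hcont : ContinuousOn φ₀' (Set.Icc (0:ℝ) 1))
    (h0 : ∀ t ∈ Set.Icc (0:ℝ) (1/3), φ₀ t = 0)
    (h1 : ∀ t ∈ Set.Icc (2/3:ℝ) 1, φ₀ t = 1) :
    ∃ C > 0, ∀ ε ∈ Set.Ioo (0:ℝ) 1,
      (∫ t in (0:ℝ)..Real.pi,
          |deriv (fun s : ℝ => (-Real.log (Real.sin s ^ 2)) *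
              (if s ≤ ε then φ₀ (s / ε)
               else if s ≤ Real.pi - ε then 1
               else φ₀ ((Real.pi - s) / ε))) t|)
        ≤ C * (1 + |Real.log ε|) ∧
      (∫ t in (0:ℝ)..Real.pi,
          ((-Real.log (Real.sin t ^ 2)) -
            (-Real.log (Real.sin t ^ 2)) *
              (if t ≤ ε then φ₀ (t / ε)
               else if t ≤ Real.pi - ε then 1
               else φ₀ ((Real.pi - t) / ε))) * Real.sin t ^ 2)
        ≤ C * ε * (1 + |Real.log ε|) := by
  have hb : ∀ t ∈ Icc (0 : ℝ) 1, 0 ≤ φ₀ t ∧ φ₀ t ≤ 1 := by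
    intro t ht
    have e0 := hmono (left_mem_Icc.2 zero_le_one) ht ht.1
    have e1 := hmono ht (right_mem_Icc.2 zero_le_one) ht.2
    rw [h0 0 (by norm_num)] at e0
    rw [h1 1 (by norm_num)] at e1
    exact ⟨e0, e1⟩
  obtain ⟨K, hK⟩ := isCompact_Icc.exists_bound_of_continuousOn hcont
  simp only [norm_eq_abs] at hK
  have hK0 : 0 ≤ K := (abs_nonneg _).trans (hK 0 (by simp))
  have hπ := pi_gt_three
  refine ⟨8 * π ^ 2 + 8 * π + 80 * K + 8, by positivity, fun ε hε => ?_⟩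
  have hε0 := hε.1
  have hε1 := hε.2
  have hL := abs_nonneg (log ε)
  constructor
  · have hB : 0 ≤ 8 * K * (5 + |log ε|) * ε := by positivity
    have hA : 0 ≤ 4 * π := by positivity
    have hae : ∀ᵐ t : ℝ, t ∉ ({ε / 3, ε, π - ε, π - ε / 3} : Set ℝ) :=
      (Set.toFinite _).countable.ae_notMem _
    refine (le_norm_self _).trans ((intervalIntegral.norm_integral_le_of_norm_le pi_pos.le
      (g := majorant (4 * π) (8 * K * (5 + |log ε|) * ε) ε) ?_
      (intervalIntegrable_majorant _ _ hε0)).trans ?_)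
    · have hpi : ∀ᵐ t : ℝ, t ∉ ({π} : Set ℝ) := (Set.countable_singleton _).ae_notMem _
      filter_upwards [hae, hpi] with t ht htπ htI
      simp only [mem_insert_iff, mem_singleton_iff, not_or] at ht htπ
      obtain ⟨n1, n2, n3, n4⟩ := ht
      have ht0 : 0 < t := htI.1
      have htπ' : t < π := lt_of_le_of_ne htI.2 htπ
      rw [norm_eq_abs, abs_abs]
      rcases lt_or_gt_of_ne n2 with c1 | c1
      · have he : (fun s : ℝ => (-log (sin s ^ 2)) * (if s ≤ ε then φ₀ (s / ε)
            else if s ≤ π - ε then 1 else φ₀ ((π - s) / ε))) =ᶠ[𝓝 t]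
            fun s => -log (sin s ^ 2) * φ₀ (s / ε) := by
          filter_upwards [Iio_mem_nhds c1] with s hs
          rw [if_pos (le_of_lt hs)]
        rw [he.deriv_eq]
        exact abs_deriv_edge_le hK hb hderiv h0 hε ht0 c1 n1
      rcases lt_or_gt_of_ne n3 with c2 | c2
      · have he : (fun s : ℝ => (-log (sin s ^ 2)) * (if s ≤ ε then φ₀ (s / ε)
            else if s ≤ π - ε then 1 else φ₀ ((π - s) / ε))) =ᶠ[𝓝 t]
            fun s => -log (sin s ^ 2) := by
          filter_upwards [Ioo_mem_nhds c1 c2] with s hs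
          rw [if_neg (not_le.2 hs.1), if_pos hs.2.le, mul_one]
        have hs : 0 < sin t := sin_pos_of_pos_of_lt_pi ht0 htπ'
        rw [he.deriv_eq, (hasDerivAt_neg_log_sin_sq hs.ne').deriv]
        refine (abs_deriv_le hs).trans ?_
        have hm : ∀ u, ε ≤ u → u ≤ π / 2 →
            2 * (1 / sin u) ≤ majorant (4 * π) (8 * K * (5 + |log ε|) * ε) ε u := by
          intro u hu1 hu2
          refine le_trans ?_ (le_majorant hA hB (by linarith))
          have hp : 0 ≤ 8 * K * (5 + |log ε|) * ε * (1 / (u + ε) ^ 2) := by positivity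
          linarith [inv_sin_le hε0 (show ε / 3 ≤ u by linarith) hu2]
        rcases le_total t (π / 2) with c3 | c3
        · exact hm t c1.le c3
        · have := hm (π - t) (by linarith) (by linarith)
          rwa [sin_pi_sub, majorant_reflect] at this
      · have he : (fun s : ℝ => (-log (sin s ^ 2)) * (if s ≤ ε then φ₀ (s / ε)
            else if s ≤ π - ε then 1 else φ₀ ((π - s) / ε))) =ᶠ[𝓝 t]
            fun s => (fun r => -log (sin r ^ 2) * φ₀ (r / ε)) (π - s) := by
          filter_upwards [Ioi_mem_nhds c2] with s hs
          have hs' : π - ε < s := hs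
          rw [if_neg (by linarith), if_neg (by linarith)]
          simp only [sin_pi_sub]
        rw [he.deriv_eq,
          deriv_comp_const_sub (f := fun r => -log (sin r ^ 2) * φ₀ (r / ε)), abs_neg,
          ← majorant_reflect]
        exact abs_deriv_edge_le hK hb hderiv h0 hε (by linarith) (by linarith)
          (fun h => n4 (by linarith))
    · refine (integral_majorant_le hA hB hε).trans ?_
      have e : 2 * (8 * K * (5 + |log ε|) * ε) / ε = 16 * K * (5 + |log ε|) := by
        field_simp
        ring
      rw [e]
      have p1 : 0 ≤ π ^ 2 * |log ε| := by positivity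
      have p2 : 0 ≤ K * |log ε| := by positivity
      nlinarith
  · refine (le_norm_self _).trans ((intervalIntegral.norm_integral_le_of_norm_le pi_pos.le
      (g := majorant 0 (4 * ε ^ 2) ε) ?_ (intervalIntegrable_majorant _ _ hε0)).trans ?_)
    · refine Eventually.of_forall fun t ht => ?_
      have hm0 : 0 ≤ majorant 0 (4 * ε ^ 2) ε t := by
        refine le_trans ?_ (le_majorant le_rfl (by positivity) (by linarith [ht.2]))
        rw [zero_mul, zero_add]
        positivity
      obtain ⟨w0, w1⟩ := neg_log_sin_sq_mul_mem t
      have hbd : ∀ x, 0 ≤ x ∧ x ≤ 1 →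
          |(-log (sin t ^ 2) - -log (sin t ^ 2) * x) * sin t ^ 2| ≤ 1 := by
        rintro x ⟨hx0, hx1⟩
        rw [show (-log (sin t ^ 2) - -log (sin t ^ 2) * x) * sin t ^ 2 =
          (-log (sin t ^ 2) * sin t ^ 2) * (1 - x) by ring,
          abs_of_nonneg (mul_nonneg w0 (by linarith))]
        exact mul_le_one₀ w1 (by linarith) (by linarith)
      rw [norm_eq_abs]
      split_ifs with c1 c2
      · exact (hbd _ (hb _ ⟨div_nonneg ht.1.le hε0.le, by rwa [div_le_one hε0]⟩)).trans
          (one_le_majorant hε0 ht.1.le c1)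
      · simpa using hm0
      · push Not at c1 c2
        refine (hbd _ (hb _ ⟨div_nonneg (by linarith [ht.2]) hε0.le, ?_⟩)).trans ?_
        · rw [div_le_one hε0]; linarith
        · rw [← majorant_reflect]
          exact one_le_majorant hε0 (by linarith [ht.2]) (by linarith)
    · refine (integral_majorant_le le_rfl (by positivity) hε).trans ?_
      have e : 2 * (4 * ε ^ 2) / ε = 8 * ε := by
        field_simp
        ring
      rw [e]
      have p1 : 0 ≤ (8 * π ^ 2 + 8 * π + 80 * K) * ε := by positivity
      have p2 : 0 ≤ (8 * π ^ 2 + 8 * π + 80 * K + 8) * ε * |log ε| := by positivity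
      nlinarith
end

section
/- Let F be a finite field of odd characteristic, ψ : F → ℂ a nontrivial additive character, λ : F → ℤ the quadratic character of F (extended by λ(0) := 0), and α ∈ Fˣ. Then Salié's formula holds: Kl_F(ψ; α) = −∑_{y ∈ F} λ(y² − 4α)·ψ(y). -/
/-- The number of units `x` with `x + α / x = y` is `λ(y² - 4α) + 1`. -/
lemma card_units_add_mul_inv_eq
    {F : Type} [Field F] [Fintype F] [DecidableEq F] (hF : ringChar F ≠ 2) (α : Fˣ) (y : F) :
    ((Finset.univ.filter fun x : Fˣ => (x : F) + (α : F) * ((x⁻¹ : Fˣ) : F) = y).card : ℤ)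
      = quadraticChar F (y ^ 2 - 4 * (α : F)) + 1 := by
  have h2 : (2 : F) ≠ 0 := Ring.two_ne_zero hF
  have hα : (α : F) ≠ 0 := α.ne_zero
  rw [← quadraticChar_card_sqrts hF]
  congr 1
  refine Finset.card_bij (fun x _ => 2 * (x : F) - y) ?_ ?_ ?_
  · intro x hx
    have hx0 : (x : F) ≠ 0 := x.ne_zero
    simp only [Finset.mem_filter, Finset.mem_univ, true_and] at hx
    simp only [Set.mem_toFinset, Set.mem_ofPred_eq]
    rw [← hx, Units.val_inv_eq_inv_val]
    field_simp
    ring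
  · intro a _ b _ hab
    refine Units.ext (mul_left_cancel₀ h2 ?_)
    exact sub_left_injective hab
  · intro t ht
    simp only [Set.mem_toFinset, Set.mem_ofPred_eq] at ht
    -- If `t = -y`, then `t² = y² - 4α` forces `4α = 0`.
    have hty : t + y ≠ 0 := by
      intro h
      have h4 : (2 * 2) * (α : F) = 0 := by linear_combination (y - t) * h + ht
      exact mul_ne_zero (mul_ne_zero h2 h2) hα h4
    refine ⟨Units.mk0 ((t + y) / 2) (div_ne_zero hty h2), ?_, ?_⟩
    · simp only [Finset.mem_filter, Finset.mem_univ, true_and, Units.val_inv_eq_inv_val,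
        Units.val_mk0]
      field_simp
      linear_combination ht
    · simp only [Units.val_mk0]
      field_simp
      ring

/-- **Salié's formula.** Let `F` be a finite field of odd characteristic, `ψ` a
nontrivial additive character of `F`, `λ` the quadratic character of `F` (extended by
`λ(0) = 0`) and `α ∈ Fˣ`. Then `Kl_F(ψ; α) = −∑_{y ∈ F} λ(y² − 4α)·ψ(y)`. -/
theorem salie_formula
    (F : Type) [Field F] [Fintype F] [DecidableEq F] (hF : ringChar F ≠ 2)
    (ψ : AddChar F ℂ) (hψ : ψ ≠ 1) (α : Fˣ) :
    Kl F (fun x => ψ x) (α : F)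
      = -∑ y : F, (quadraticChar F (y ^ 2 - 4 * (α : F)) : ℂ) * ψ y := by
  rw [Kl, finsum_eq_sum_of_fintype, neg_inj,
    ← Finset.sum_fiberwise (g := fun x : Fˣ => (x : F) + (α : F) * ((x⁻¹ : Fˣ) : F))]
  calc _ = ∑ y : F, ((quadraticChar F (y ^ 2 - 4 * (α : F)) : ℂ) * ψ y + ψ y) := by
        refine Finset.sum_congr rfl fun y _ => ?_
        rw [Finset.sum_congr rfl (g := fun _ => ψ y)
          fun x hx => congrArg ψ (Finset.mem_filter.mp hx).2, Finset.sum_const, nsmul_eq_mul]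
        have h := congrArg (Int.cast : ℤ → ℂ) (card_units_add_mul_inv_eq hF α y)
        rw [Int.cast_natCast, Int.cast_add, Int.cast_one] at h
        rw [h]
        ring
    _ = _ := by
        rw [Finset.sum_add_distrib, AddChar.sum_eq_zero_of_ne_one hψ, add_zero]
end
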